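/- arXiv:1605.00974 — 4 statements merged into one kernel-verified Lean document; each statement's English description precedes it below -/
import Mathlib

section
/- Grönwall-type light-cone estimate: let W : ℝ → ℝ be C², and let X_j and X̃_j, j ∈ {0,…,N}, be two solutions of the Newton chain on {0,…,N} with common constant right boundary X_N = X̃_N = N·φ_r, whose positions and velocities agree at t = 0 for all j ∈ {1,…,N−1}. Write U_j = X_{j+1} − X_j, Ũ_j = X̃_{j+1} − X̃_j, V_j = X_j', Ṽ_j = X̃_j'. Assume K := sup{|W''(u)| : u ∈ (u₁,u₂)} < ∞, where (u₁,u₂) is an open interval containing all values U_j(t) and Ũ_j(t) for all j and t ≥ 0, and assume M := sup_{t ≥ 0} |U_0(t) − Ũ_0(t)| < ∞. Then for all j ∈ {1,…,N−1} and all t ≥ 0: |U_j(t) − Ũ_j(t)| ≤ M·(2t√K)^{2j}/(2j)!·exp(2t√K), and |V_j(t) − Ṽ_j(t)| ≤ M·√(2K)·[ (2t√K)^{2j+1}/(2j+1)!·exp(2t√K) + (2t√K)^{2j−1}/(2j−1)!·exp(2t√K) ]. -/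
/-!
Strains are the differences of neighbouring positions, and `k = 2√K`. The difference `u` of the two
solutions satisfies `‖u_j''‖ ≤ K (‖d_j‖ + ‖d_{j-1}‖)` with `d_j = u_{j+1} - u_j`, so
`‖d_j''‖ ≤ k² max_{|i-j| ≤ 1} ‖d_i‖`. Grönwall's inequality for the whole system gives the bound
`‖d_j(t)‖ ≤ M e^{kt}`, which ignores the position in the chain. As the forcing enters through `d_0`
alone, each further site costs two integrations: if `‖d_i(t)‖ ≤ M E(kt)` for all `i ≥ m`, then
`‖d_i''(t)‖ ≤ k² M E(kt)` for all `i ≥ m + 1`. Starting from `E = exp`, the iterated primitives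
vanishing at `0` are the tails `E_n(s) = ∑_{i ≥ n} s^i/i!`, so `‖d_m(t)‖ ≤ M E_{2m}(kt)`, and
`E_n(s) ≤ s^n/n! · e^s`. The velocity bound is one more integration.
-/

open Set Filter

open scoped NNReal

section Integration

variable {E : Type*} [NormedAddCommGroup E] [NormedSpace ℝ E] {f f' : ℝ → E}

lemma norm_le_of_norm_deriv_le_deriv {B B' : ℝ → ℝ}
    (hf : ∀ t, 0 ≤ t → HasDerivWithinAt f (f' t) (Ici 0) t) (hf0 : f 0 = 0)
    (hB : ∀ t, HasDerivAt B (B' t) t) (hB0 : 0 ≤ B 0) (hf' : ∀ t, 0 ≤ t → ‖f' t‖ ≤ B' t)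
    {t : ℝ} (ht : 0 ≤ t) : ‖f t‖ ≤ B t :=
  image_norm_le_of_norm_deriv_right_le_deriv_boundary
    (fun s hs ↦ (hf s hs.1).continuousWithinAt.mono Icc_subset_Ici_self)
    (fun s hs ↦ (hf s hs.1).mono (Ici_subset_Ici.2 hs.1))
    (by simpa [hf0] using hB0) hB (fun s hs ↦ hf' s hs.1) (right_mem_Icc.2 ht)

lemma norm_le_comp_mul_of_norm_deriv_le {G g : ℝ → ℝ} {k : ℝ}
    (hf : ∀ t, 0 ≤ t → HasDerivWithinAt f (f' t) (Ici 0) t) (hf0 : f 0 = 0)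
    (hG : ∀ s, HasDerivAt G (g s) s) (hG0 : 0 ≤ G 0) (hf' : ∀ t, 0 ≤ t → ‖f' t‖ ≤ k * g (k * t))
    {t : ℝ} (ht : 0 ≤ t) : ‖f t‖ ≤ G (k * t) :=
  norm_le_of_norm_deriv_le_deriv (B := fun t ↦ G (k * t)) hf hf0
    (fun t ↦ by
      simpa [Function.comp_def, mul_comm] using
        (hG (k * t)).comp t ((hasDerivAt_id t).const_mul k))
    (by simpa using hG0) hf' ht

end Integration

section ExpTail

open Finset

/-- The tail `∑_{i ≥ n} s ^ i / i!` of the exponential series. -/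
noncomputable def expTail (n : ℕ) (s : ℝ) : ℝ :=
  Real.exp s - ∑ i ∈ range n, s ^ i / (i.factorial : ℝ)

lemma expTail_zero (s : ℝ) : expTail 0 s = Real.exp s := by
  simp [expTail]

lemma expTail_succ (n : ℕ) (s : ℝ) :
    expTail (n + 1) s = expTail n s - s ^ n / (n.factorial : ℝ) := by
  rw [expTail, expTail, sum_range_succ, sub_sub]

lemma expTail_succ_apply_zero (n : ℕ) : expTail (n + 1) 0 = 0 := by
  simp [expTail, sum_range_succ']

lemma expTail_nonneg (n : ℕ) {s : ℝ} (hs : 0 ≤ s) : 0 ≤ expTail n s :=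
  sub_nonneg.2 (Real.sum_le_exp_of_nonneg hs n)

lemma hasDerivAt_pow_succ_div_factorial (n : ℕ) (s : ℝ) :
    HasDerivAt (fun s : ℝ ↦ s ^ (n + 1) / ((n + 1).factorial : ℝ))
      (s ^ n / (n.factorial : ℝ)) s := by
  refine ((hasDerivAt_pow (n + 1) s).div_const _).congr_deriv ?_
  rw [Nat.factorial_succ, Nat.cast_mul, Nat.add_sub_cancel]
  exact mul_div_mul_left _ _ (Nat.cast_ne_zero.2 n.succ_ne_zero)

lemma hasDerivAt_expTail_succ (n : ℕ) (s : ℝ) :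
    HasDerivAt (expTail (n + 1)) (expTail n s) s := by
  induction n with
  | zero =>
    rw [funext (expTail_succ 0), expTail_zero]
    simpa [expTail_zero] using (Real.hasDerivAt_exp s).sub_const 1
  | succ n ih =>
    rw [funext (expTail_succ (n + 1)), expTail_succ]
    exact ih.sub (hasDerivAt_pow_succ_div_factorial n s)

lemma expTail_le (n : ℕ) {s : ℝ} (hs : 0 ≤ s) :
    expTail n s ≤ s ^ n / (n.factorial : ℝ) * Real.exp s := by
  induction n generalizing s with
  | zero => simp [expTail_zero]
  | succ n ih =>
    refine (le_abs_self _).trans (norm_le_of_norm_deriv_le_deriv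
      (fun t _ ↦ (hasDerivAt_expTail_succ n t).hasDerivWithinAt) (expTail_succ_apply_zero n)
      (fun t ↦ (hasDerivAt_pow_succ_div_factorial n t).mul (Real.hasDerivAt_exp t))
      (by simp) (fun t ht ↦ ?_) hs)
    rw [Real.norm_of_nonneg (expTail_nonneg n ht)]
    exact (ih ht).trans (le_add_of_nonneg_right (by positivity))

end ExpTail

lemma gronwallBound_zero_mul (k c x : ℝ) :
    gronwallBound 0 k (k * c) x = c * (Real.exp (k * x) - 1) := by
  rcases eq_or_ne k 0 with rfl | hk
  · simp [gronwallBound_K0]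
  · simp only [gronwallBound_of_K_ne_0 hk, zero_mul, zero_add, mul_div_cancel_left₀ c hk]

section Perturbation

variable {E : Type*} [NormedAddCommGroup E] [NormedSpace ℝ E]

/-- Displacements `u`, velocities `v` and accelerations `a` of a chain which starts undisplaced and
at rest, whose acceleration at each site is controlled by the two adjacent strains `u_{j+1} - u_j`,
and whose sites `j ≥ N` do not move. Site `0` is unconstrained and drives the chain. -/
structure IsChainPerturbation (K : ℝ≥0) (N : ℕ) (u v a : ℕ → ℝ → E) : Prop where
  hasDerivWithinAt_displacement : ∀ j t, 0 ≤ t →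
    HasDerivWithinAt (u (j + 1)) (v (j + 1) t) (Ici 0) t
  hasDerivWithinAt_velocity : ∀ j t, 0 ≤ t →
    HasDerivWithinAt (v (j + 1)) (a (j + 1) t) (Ici 0) t
  displacement_initial : ∀ j, u (j + 1) 0 = 0
  velocity_initial : ∀ j, v (j + 1) 0 = 0
  displacement_eq_zero_of_le : ∀ j, N ≤ j → ∀ t, 0 ≤ t → u j t = 0
  norm_acceleration_le : ∀ j t, 0 ≤ t →
    ‖a (j + 1) t‖ ≤ K * (‖u (j + 2) t - u (j + 1) t‖ + ‖u (j + 1) t - u j t‖)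

namespace IsChainPerturbation

variable {K : ℝ≥0} {N : ℕ} {u v a : ℕ → ℝ → E} {M : ℝ}

lemma hasDerivWithinAt_strain (h : IsChainPerturbation K N u v a) (j : ℕ) {t : ℝ} (ht : 0 ≤ t) :
    HasDerivWithinAt (fun t ↦ u (j + 2) t - u (j + 1) t) (v (j + 2) t - v (j + 1) t) (Ici 0) t :=
  (h.hasDerivWithinAt_displacement (j + 1) t ht).sub (h.hasDerivWithinAt_displacement j t ht)

lemma hasDerivWithinAt_strain_rate (h : IsChainPerturbation K N u v a) (j : ℕ) {t : ℝ}
    (ht : 0 ≤ t) :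
    HasDerivWithinAt (fun t ↦ v (j + 2) t - v (j + 1) t) (a (j + 2) t - a (j + 1) t) (Ici 0) t :=
  (h.hasDerivWithinAt_velocity (j + 1) t ht).sub (h.hasDerivWithinAt_velocity j t ht)

lemma strain_initial (h : IsChainPerturbation K N u v a) (j : ℕ) :
    u (j + 2) 0 - u (j + 1) 0 = 0 := by
  rw [h.displacement_initial (j + 1), h.displacement_initial j, sub_zero]

lemma strain_rate_initial (h : IsChainPerturbation K N u v a) (j : ℕ) :
    v (j + 2) 0 - v (j + 1) 0 = 0 := by
  rw [h.velocity_initial (j + 1), h.velocity_initial j, sub_zero]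

lemma norm_acceleration_le_sqrt_mul (h : IsChainPerturbation K N u v a) (j : ℕ) {t b c : ℝ}
    (ht : 0 ≤ t) (hb : 2 * √K * ‖u (j + 2) t - u (j + 1) t‖ ≤ b)
    (hc : 2 * √K * ‖u (j + 1) t - u j t‖ ≤ c) : ‖a (j + 1) t‖ ≤ √K / 2 * (b + c) :=
  calc ‖a (j + 1) t‖
      ≤ K * (‖u (j + 2) t - u (j + 1) t‖ + ‖u (j + 1) t - u j t‖) := h.norm_acceleration_le j t ht
    _ = √K / 2 * (2 * √K * ‖u (j + 2) t - u (j + 1) t‖ + 2 * √K * ‖u (j + 1) t - u j t‖) := by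
      linear_combination (-(‖u (j + 2) t - u (j + 1) t‖ + ‖u (j + 1) t - u j t‖)) *
        Real.mul_self_sqrt K.coe_nonneg
    _ ≤ √K / 2 * (b + c) := by gcongr

lemma norm_acceleration_sub_le (h : IsChainPerturbation K N u v a) {j : ℕ} {t b : ℝ} (ht : 0 ≤ t)
    (hb : ∀ i, j ≤ i → 2 * √K * ‖u (i + 1) t - u i t‖ ≤ b) :
    ‖a (j + 2) t - a (j + 1) t‖ ≤ 2 * √K * b := by
  have left := h.norm_acceleration_le_sqrt_mul j ht (hb (j + 1) j.le_succ) (hb j le_rfl)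
  have right := h.norm_acceleration_le_sqrt_mul (j + 1) ht (hb (j + 2) (by omega))
    (hb (j + 1) j.le_succ)
  linarith [norm_sub_le (a (j + 2) t) (a (j + 1) t)]

/-- The strains `u_{j+1} - u_j`, `1 ≤ j ≤ N`, and their rates as the unknown of a first-order
system. The factor `2√K` balances the two components, so that they grow at the same rate `2√K`. -/
noncomputable def strainPhase (K : ℝ≥0) (N : ℕ) (u v : ℕ → ℝ → E) (t : ℝ) : Fin N → E × E :=
  fun j ↦ ((2 * √K) • (u (j + 2) t - u (j + 1) t), v (j + 2) t - v (j + 1) t)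

lemma hasDerivWithinAt_strainPhase (h : IsChainPerturbation K N u v a) {t : ℝ} (ht : 0 ≤ t) :
    HasDerivWithinAt (strainPhase K N u v) (strainPhase K N v a t) (Ici 0) t :=
  hasDerivWithinAt_pi.2 fun j ↦
    ((h.hasDerivWithinAt_strain j ht).const_smul _).prodMk (h.hasDerivWithinAt_strain_rate j ht)

lemma strainPhase_apply_zero (h : IsChainPerturbation K N u v a) : strainPhase K N u v 0 = 0 := by
  ext j <;> simp [strainPhase, h.strain_initial, h.strain_rate_initial]

lemma mul_norm_strain_le_norm_strainPhase_add (h : IsChainPerturbation K N u v a) {t : ℝ}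
    (ht : 0 ≤ t) (hM : ‖u 1 t - u 0 t‖ ≤ M) (i : ℕ) :
    2 * √K * ‖u (i + 1) t - u i t‖ ≤ ‖strainPhase K N u v t‖ + 2 * √K * M := by
  have hM0 : 0 ≤ M := (norm_nonneg _).trans hM
  rcases i with _ | j
  · exact le_add_of_nonneg_of_le (norm_nonneg _) (by gcongr)
  refine le_add_of_le_of_nonneg ?_ (by positivity)
  rcases lt_or_ge j N with hj | hj
  · calc 2 * √K * ‖u (j + 2) t - u (j + 1) t‖
        = ‖(strainPhase K N u v t ⟨j, hj⟩).1‖ := by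
          rw [strainPhase, norm_smul, Real.norm_of_nonneg (by positivity)]
      _ ≤ ‖strainPhase K N u v t‖ := (norm_fst_le _).trans (norm_le_pi_norm _ _)
  · rw [h.displacement_eq_zero_of_le (j + 2) (by omega) t ht,
      h.displacement_eq_zero_of_le (j + 1) (by omega) t ht, sub_zero, norm_zero, mul_zero]
    exact norm_nonneg _

lemma norm_strainPhase_deriv_le (h : IsChainPerturbation K N u v a) {t : ℝ} (ht : 0 ≤ t)
    (hM : ‖u 1 t - u 0 t‖ ≤ M) :
    ‖strainPhase K N v a t‖
      ≤ 2 * √K * ‖strainPhase K N u v t‖ + 2 * √K * (2 * √K * M) := by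
  have hM0 : 0 ≤ M := (norm_nonneg _).trans hM
  refine (pi_norm_le_iff_of_nonneg (by positivity)).2 fun j ↦ norm_prod_le_iff.2 ⟨?_, ?_⟩
  · rw [strainPhase, norm_smul, Real.norm_of_nonneg (by positivity)]
    refine le_add_of_le_of_nonneg ?_ (by positivity)
    gcongr
    exact (norm_snd_le (strainPhase K N u v t j)).trans (norm_le_pi_norm _ j)
  · rw [← mul_add]
    exact h.norm_acceleration_sub_le ht
      fun i _ ↦ h.mul_norm_strain_le_norm_strainPhase_add ht hM i

lemma norm_strainPhase_le (h : IsChainPerturbation K N u v a)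
    (hM : ∀ t, 0 ≤ t → ‖u 1 t - u 0 t‖ ≤ M) {t : ℝ} (ht : 0 ≤ t) :
    ‖strainPhase K N u v t‖ ≤ 2 * √K * M * (Real.exp (2 * √K * t) - 1) := by
  have gronwall := norm_le_gronwallBound_of_norm_deriv_right_le (a := 0) (b := t)
    (fun s hs ↦ (h.hasDerivWithinAt_strainPhase hs.1).continuousWithinAt.mono Icc_subset_Ici_self)
    (fun s hs ↦ (h.hasDerivWithinAt_strainPhase hs.1).mono (Ici_subset_Ici.2 hs.1))
    (by rw [h.strainPhase_apply_zero, norm_zero])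
    (fun s hs ↦ h.norm_strainPhase_deriv_le hs.1 (hM s hs.1)) t (right_mem_Icc.2 ht)
  rwa [sub_zero, gronwallBound_zero_mul] at gronwall

lemma norm_strain_le_mul_exp (h : IsChainPerturbation K N u v a)
    (hM : ∀ t, 0 ≤ t → ‖u 1 t - u 0 t‖ ≤ M) (i : ℕ) {t : ℝ} (ht : 0 ≤ t) :
    ‖u (i + 1) t - u i t‖ ≤ M * Real.exp (2 * √K * t) := by
  have hM0 : 0 ≤ M := (norm_nonneg _).trans (hM 0 le_rfl)
  rcases i with _ | j
  · exact (hM t ht).trans (le_mul_of_one_le_right hM0 (Real.one_le_exp (by positivity)))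
  rcases lt_or_ge j N with hj | hj
  · have strain_rate_le (s : ℝ) (hs : 0 ≤ s) :
        ‖v (j + 2) s - v (j + 1) s‖ ≤ 2 * √K * (M * Real.exp (2 * √K * s)) :=
      calc ‖v (j + 2) s - v (j + 1) s‖
          ≤ ‖strainPhase K N u v s‖ :=
            (norm_snd_le (strainPhase K N u v s ⟨j, hj⟩)).trans (norm_le_pi_norm _ _)
        _ ≤ 2 * √K * M * (Real.exp (2 * √K * s) - 1) := h.norm_strainPhase_le hM hs
        _ ≤ 2 * √K * M * Real.exp (2 * √K * s) := by gcongr; exact sub_le_self _ zero_le_one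
        _ = 2 * √K * (M * Real.exp (2 * √K * s)) := mul_assoc _ _ _
    exact norm_le_comp_mul_of_norm_deriv_le (fun s ↦ h.hasDerivWithinAt_strain j)
      (h.strain_initial j) (fun s ↦ (Real.hasDerivAt_exp s).const_mul M) (by positivity)
      strain_rate_le ht
  · rw [h.displacement_eq_zero_of_le (j + 2) (by omega) t ht,
      h.displacement_eq_zero_of_le (j + 1) (by omega) t ht, sub_zero, norm_zero]
    positivity

lemma norm_strain_le_mul_expTail (h : IsChainPerturbation K N u v a)
    (hM : ∀ t, 0 ≤ t → ‖u 1 t - u 0 t‖ ≤ M) {m i : ℕ} (hmi : m ≤ i) {t : ℝ} (ht : 0 ≤ t) :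
    ‖u (i + 1) t - u i t‖ ≤ M * expTail (2 * m) (2 * √K * t) := by
  induction m generalizing i t with
  | zero =>
    rw [mul_zero, expTail_zero]
    exact h.norm_strain_le_mul_exp hM i ht
  | succ m ih =>
    obtain ⟨j, rfl⟩ : ∃ j, i = j + 1 := ⟨i - 1, by omega⟩
    have primitive (n : ℕ) (s : ℝ) :
        HasDerivAt (fun s ↦ M * expTail (n + 1) s) (M * expTail n s) s :=
      (hasDerivAt_expTail_succ n s).const_mul M
    have primitive_zero (n : ℕ) : 0 ≤ M * expTail (n + 1) 0 := by
      rw [expTail_succ_apply_zero, mul_zero]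
    have acceleration_sub_le (s : ℝ) (hs : 0 ≤ s) : ‖a (j + 2) s - a (j + 1) s‖
        ≤ 2 * √K * (2 * √K * (M * expTail (2 * m) (2 * √K * s))) :=
      h.norm_acceleration_sub_le hs fun l hl ↦ by gcongr; exact ih (by omega) hs
    have strain_rate_le (s : ℝ) (hs : 0 ≤ s) : ‖v (j + 2) s - v (j + 1) s‖
        ≤ 2 * √K * (M * expTail (2 * m + 1) (2 * √K * s)) :=
      norm_le_comp_mul_of_norm_deriv_le (fun s ↦ h.hasDerivWithinAt_strain_rate j)
        (h.strain_rate_initial j) (fun s ↦ (primitive (2 * m) s).const_mul (2 * √K))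
        (mul_nonneg (by positivity) (primitive_zero _)) acceleration_sub_le hs
    exact norm_le_comp_mul_of_norm_deriv_le (fun s ↦ h.hasDerivWithinAt_strain j)
      (h.strain_initial j) (primitive (2 * m + 1)) (primitive_zero _) strain_rate_le ht

lemma norm_velocity_le_mul_expTail (h : IsChainPerturbation K N u v a)
    (hM : ∀ t, 0 ≤ t → ‖u 1 t - u 0 t‖ ≤ M) (j : ℕ) {t : ℝ} (ht : 0 ≤ t) :
    ‖v (j + 1) t‖ ≤ √K / 2 * M *
      (expTail (2 * (j + 1) + 1) (2 * √K * t) + expTail (2 * j + 1) (2 * √K * t)) := by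
  have scaled_strain_le (i : ℕ) (s : ℝ) (hs : 0 ≤ s) :
      2 * √K * ‖u (i + 1) s - u i s‖ ≤ 2 * √K * (M * expTail (2 * i) (2 * √K * s)) := by
    gcongr
    exact h.norm_strain_le_mul_expTail hM le_rfl hs
  refine norm_le_comp_mul_of_norm_deriv_le (h.hasDerivWithinAt_velocity j) (h.velocity_initial j)
    (fun s ↦ ((hasDerivAt_expTail_succ (2 * (j + 1)) s).add
      (hasDerivAt_expTail_succ (2 * j) s)).const_mul (√K / 2 * M))
    (by simp [expTail_succ_apply_zero]) (fun s hs ↦ ?_) ht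
  refine (h.norm_acceleration_le_sqrt_mul j hs (scaled_strain_le (j + 1) s hs)
    (scaled_strain_le j s hs)).trans_eq ?_
  ring

end IsChainPerturbation

end Perturbation

section Truncation

variable {E : Type*} [AddCommGroup E]

/-- The difference of two chains at the sites `j < N`, continued by `0` to the sites `j ≥ N`. For
chains which agree at site `N` this does not affect the strains of the bonds `j < N`. -/
def truncatedSub (N : ℕ) (X X' : ℕ → ℝ → E) (j : ℕ) (t : ℝ) : E :=
  if j < N then X j t - X' j t else 0

lemma truncatedSub_of_lt {N j : ℕ} (hj : j < N) (X X' : ℕ → ℝ → E) :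
    truncatedSub N X X' j = X j - X' j :=
  funext fun _ ↦ if_pos hj

lemma truncatedSub_of_le {N j : ℕ} (hj : N ≤ j) (X X' : ℕ → ℝ → E) :
    truncatedSub N X X' j = 0 :=
  funext fun _ ↦ if_neg hj.not_gt

lemma truncatedSub_succ_sub {N j : ℕ} {X X' : ℕ → ℝ → E} {t : ℝ} (hj : j < N)
    (hN : X N t = X' N t) :
    truncatedSub N X X' (j + 1) t - truncatedSub N X X' j t
      = (X (j + 1) t - X j t) - (X' (j + 1) t - X' j t) := by
  rw [truncatedSub_of_lt hj, Pi.sub_apply]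
  rcases (Nat.succ_le_of_lt hj).eq_or_lt with rfl | hj'
  · rw [truncatedSub_of_le le_rfl, hN, Pi.zero_apply]
    abel
  · rw [truncatedSub_of_lt hj', Pi.sub_apply]
    abel

end Truncation

section NewtonChain

/-- The net force on site `j` exerted by its two neighbours, when a bond of strain `r` pulls with
force `F r`; for a chain with interaction potential `W` this is used with `F = W'`. -/
def chainForce {E : Type*} [AddCommGroup E] (F : E → E) (X : ℕ → ℝ → E) (j : ℕ) (t : ℝ) : E :=
  F (X (j + 1) t - X j t) - F (X j t - X (j - 1) t)

lemma norm_chainForce_sub_le {E : Type*} [NormedAddCommGroup E] {F : E → E} {S : Set E} {K : ℝ≥0}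
    (hF : LipschitzOnWith K F S) {X X' : ℕ → ℝ → E} {j : ℕ} {t : ℝ}
    (hS : X (j + 2) t - X (j + 1) t ∈ S ∧ X' (j + 2) t - X' (j + 1) t ∈ S)
    (hS' : X (j + 1) t - X j t ∈ S ∧ X' (j + 1) t - X' j t ∈ S) :
    ‖chainForce F X (j + 1) t - chainForce F X' (j + 1) t‖
      ≤ K * (‖(X (j + 2) t - X (j + 1) t) - (X' (j + 2) t - X' (j + 1) t)‖
        + ‖(X (j + 1) t - X j t) - (X' (j + 1) t - X' j t)‖) := by
  rw [chainForce, chainForce, sub_sub_sub_comm, mul_add]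
  exact (norm_sub_le _ _).trans
    (add_le_add (hF.norm_sub_le hS.1 hS.2) (hF.norm_sub_le hS'.1 hS'.2))

variable {E : Type*} [NormedAddCommGroup E] [NormedSpace ℝ E]

/-- Newton's equations on the interior sites `{1,…,N-1}` of a chain, with positions `X` and
velocities `V`, for times `t ≥ 0`. The boundary sites `0` and `N` may move arbitrarily. -/
structure IsNewtonChain (F : E → E) (N : ℕ) (X V : ℕ → ℝ → E) : Prop where
  hasDerivWithinAt_position : ∀ j, 1 ≤ j → j < N → ∀ t, 0 ≤ t →
    HasDerivWithinAt (X j) (V j t) (Ici 0) t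
  hasDerivWithinAt_velocity : ∀ j, 1 ≤ j → j < N → ∀ t, 0 ≤ t →
    HasDerivWithinAt (V j) (chainForce F X j t) (Ici 0) t

lemma isNewtonChain_of_contDiffOn {F : E → E} {N : ℕ} {X : ℕ → ℝ → E}
    (hX : ∀ j, 1 ≤ j → j < N → ContDiffOn ℝ 2 (X j) (Ici 0))
    (heq : ∀ j, 1 ≤ j → j < N → ∀ t, 0 ≤ t →
      derivWithin (derivWithin (X j) (Ici 0)) (Ici 0) t = chainForce F X j t) :
    IsNewtonChain F N X fun j ↦ derivWithin (X j) (Ici 0) where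
  hasDerivWithinAt_position j hj hjN t ht :=
    ((hX j hj hjN).differentiableOn two_ne_zero t ht).hasDerivWithinAt
  hasDerivWithinAt_velocity j hj hjN t ht := by
    have hV : ContDiffOn ℝ 1 (derivWithin (X j) (Ici 0)) (Ici 0) :=
      (hX j hj hjN).derivWithin (uniqueDiffOn_Ici 0) (by norm_num)
    exact heq j hj hjN t ht ▸ (hV.differentiableOn one_ne_zero t ht).hasDerivWithinAt

lemma IsNewtonChain.isChainPerturbation {F : E → E} {S : Set E} {K : ℝ≥0} {N : ℕ}
    {X X' V V' : ℕ → ℝ → E} (hX : IsNewtonChain F N X V) (hX' : IsNewtonChain F N X' V')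
    (hF : LipschitzOnWith K F S)
    (hS : ∀ j < N, ∀ t, 0 ≤ t → X (j + 1) t - X j t ∈ S ∧ X' (j + 1) t - X' j t ∈ S)
    (hbdy : ∀ t, 0 ≤ t → X N t = X' N t)
    (hinit : ∀ j, 1 ≤ j → j < N → X j 0 = X' j 0 ∧ V j 0 = V' j 0) :
    IsChainPerturbation K N (truncatedSub N X X') (truncatedSub N V V')
      (truncatedSub N (chainForce F X) (chainForce F X')) where
  hasDerivWithinAt_displacement j t ht := by
    rcases lt_or_ge (j + 1) N with hj | hj
    · simp only [truncatedSub_of_lt hj]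
      exact (hX.hasDerivWithinAt_position _ j.succ_pos hj t ht).sub
        (hX'.hasDerivWithinAt_position _ j.succ_pos hj t ht)
    · simp only [truncatedSub_of_le hj]
      exact hasDerivWithinAt_const t _ 0
  hasDerivWithinAt_velocity j t ht := by
    rcases lt_or_ge (j + 1) N with hj | hj
    · simp only [truncatedSub_of_lt hj]
      exact (hX.hasDerivWithinAt_velocity _ j.succ_pos hj t ht).sub
        (hX'.hasDerivWithinAt_velocity _ j.succ_pos hj t ht)
    · simp only [truncatedSub_of_le hj]
      exact hasDerivWithinAt_const t _ 0
  displacement_initial j := ite_eq_right_iff.2 fun hj ↦ sub_eq_zero.2 (hinit _ j.succ_pos hj).1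
  velocity_initial j := ite_eq_right_iff.2 fun hj ↦ sub_eq_zero.2 (hinit _ j.succ_pos hj).2
  displacement_eq_zero_of_le j hj t _ := congrFun (truncatedSub_of_le hj X X') t
  norm_acceleration_le j t ht := by
    rcases lt_or_ge (j + 1) N with hj | hj
    · rw [truncatedSub_succ_sub hj (hbdy t ht), truncatedSub_succ_sub (by omega) (hbdy t ht),
        truncatedSub_of_lt hj]
      exact norm_chainForce_sub_le hF (hS (j + 1) hj t ht) (hS j (by omega) t ht)
    · rw [truncatedSub_of_le hj, Pi.zero_apply, norm_zero]
      positivity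

lemma lipschitzOnWith_deriv_of_abs_deriv_deriv_le {W : ℝ → ℝ} (hW : ContDiff ℝ 2 W) {s : Set ℝ}
    (hs : Convex ℝ s) {K : ℝ≥0} (hK : ∀ u ∈ s, |deriv (deriv W) u| ≤ K) :
    LipschitzOnWith K (deriv W) s :=
  hs.lipschitzOnWith_of_nnnorm_deriv_le (fun u _ ↦ hW.differentiable_deriv_two u) hK

theorem gronwall_light_cone_estimate_general {F : E → E} {S : Set E} {K : ℝ≥0} {N : ℕ}
    {X X' V V' : ℕ → ℝ → E} (hX : IsNewtonChain F N X V) (hX' : IsNewtonChain F N X' V')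
    (hF : LipschitzOnWith K F S)
    (hS : ∀ j < N, ∀ t, 0 ≤ t → X (j + 1) t - X j t ∈ S ∧ X' (j + 1) t - X' j t ∈ S)
    (hbdy : ∀ t, 0 ≤ t → X N t = X' N t)
    (hinit : ∀ j, 1 ≤ j → j < N → X j 0 = X' j 0 ∧ V j 0 = V' j 0) {M : ℝ}
    (hM : ∀ t, 0 ≤ t → ‖(X 1 t - X 0 t) - (X' 1 t - X' 0 t)‖ ≤ M)
    {j : ℕ} (hj : 1 ≤ j) (hjN : j < N) {t : ℝ} (ht : 0 ≤ t) :
    ‖(X (j + 1) t - X j t) - (X' (j + 1) t - X' j t)‖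
        ≤ M * (2 * t * √K) ^ (2 * j) / ((2 * j).factorial : ℝ) * Real.exp (2 * t * √K) ∧
      ‖V j t - V' j t‖
        ≤ M * √(2 * K) *
          ((2 * t * √K) ^ (2 * j + 1) / ((2 * j + 1).factorial : ℝ) * Real.exp (2 * t * √K)
            + (2 * t * √K) ^ (2 * j - 1) / ((2 * j - 1).factorial : ℝ)
              * Real.exp (2 * t * √K)) := by
  have h := hX.isChainPerturbation hX' hF hS hbdy hinit
  have hM' (s : ℝ) (hs : 0 ≤ s) :
      ‖truncatedSub N X X' 1 s - truncatedSub N X X' 0 s‖ ≤ M := by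
    rw [truncatedSub_succ_sub (by omega) (hbdy s hs)]
    exact hM s hs
  have hM0 : 0 ≤ M := (norm_nonneg _).trans (hM 0 le_rfl)
  have hs : 0 ≤ 2 * √K * t := by positivity
  rw [mul_right_comm 2 t]
  constructor
  · rw [← truncatedSub_succ_sub hjN (hbdy t ht), mul_div_assoc, mul_assoc]
    exact (h.norm_strain_le_mul_expTail hM' le_rfl ht).trans (by gcongr; exact expTail_le _ hs)
  · obtain ⟨i, rfl⟩ : ∃ i, j = i + 1 := ⟨j - 1, by omega⟩
    have velocity_le := h.norm_velocity_le_mul_expTail hM' i ht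
    rw [truncatedSub_of_lt hjN] at velocity_le
    have hsqrt : √K / 2 ≤ √(2 * K) :=
      (half_le_self (Real.sqrt_nonneg _)).trans (Real.sqrt_le_sqrt (by linarith [K.2]))
    rw [mul_comm M]
    refine velocity_le.trans (mul_le_mul (by gcongr)
      (add_le_add (expTail_le _ hs) (expTail_le _ hs)) ?_ (by positivity))
    exact add_nonneg (expTail_nonneg _ hs) (expTail_nonneg _ hs)

end NewtonChain

/-- **Grönwall-type light-cone estimate.** Let `X` and `X'` be two solutions of the
Newton chain on `{0,…,N}` with common constant right boundary `X_N = X'_N = N φ_r`,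
agreeing (positions and velocities) at `t = 0` for `j ∈ {1,…,N−1}`.  If
`|W''| ≤ K` on an open interval `(u₁,u₂)` containing all the values `U_j(t)`,
`Ũ_j(t)`, and `|U_0(t) − Ũ_0(t)| ≤ M` for all `t ≥ 0`, then for `j ∈ {1,…,N−1}`
and `t ≥ 0`:
`|U_j(t) − Ũ_j(t)| ≤ M (2t√K)^{2j}/(2j)! · e^{2t√K}` and
`|V_j(t) − Ṽ_j(t)| ≤ M √(2K) [(2t√K)^{2j+1}/(2j+1)! + (2t√K)^{2j−1}/(2j−1)!] e^{2t√K}`. -/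
theorem gronwall_light_cone_estimate
    (N : ℕ) (hN : 1 ≤ N) (W : ℝ → ℝ) (hW : ContDiff ℝ 2 W) (φr : ℝ)
    (X X' : ℕ → ℝ → ℝ)
    (hsm : ∀ j ≤ N, ContDiffOn ℝ 2 (X j) (Set.Ici 0) ∧ ContDiffOn ℝ 2 (X' j) (Set.Ici 0))
    (hbdy : ∀ t ∈ Set.Ici (0 : ℝ), X N t = (N : ℝ) * φr ∧ X' N t = (N : ℝ) * φr)
    (heq : ∀ j, 1 ≤ j → j ≤ N - 1 → ∀ t ∈ Set.Ici (0 : ℝ),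
      derivWithin (derivWithin (X j) (Set.Ici 0)) (Set.Ici 0) t
        = deriv W (X (j + 1) t - X j t) - deriv W (X j t - X (j - 1) t))
    (heq' : ∀ j, 1 ≤ j → j ≤ N - 1 → ∀ t ∈ Set.Ici (0 : ℝ),
      derivWithin (derivWithin (X' j) (Set.Ici 0)) (Set.Ici 0) t
        = deriv W (X' (j + 1) t - X' j t) - deriv W (X' j t - X' (j - 1) t))
    (hinit : ∀ j, 1 ≤ j → j ≤ N - 1 →
      X j 0 = X' j 0 ∧ derivWithin (X j) (Set.Ici 0) 0 = derivWithin (X' j) (Set.Ici 0) 0)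
    (u₁ u₂ : ℝ)
    (hU : ∀ j < N, ∀ t ∈ Set.Ici (0 : ℝ),
      X (j + 1) t - X j t ∈ Set.Ioo u₁ u₂ ∧ X' (j + 1) t - X' j t ∈ Set.Ioo u₁ u₂)
    (K : ℝ) (hK : ∀ u ∈ Set.Ioo u₁ u₂, |deriv (deriv W) u| ≤ K)
    (M : ℝ) (hM : ∀ t ∈ Set.Ici (0 : ℝ),
      |(X 1 t - X 0 t) - (X' 1 t - X' 0 t)| ≤ M) :
    ∀ j, 1 ≤ j → j ≤ N - 1 → ∀ t ∈ Set.Ici (0 : ℝ),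
      |(X (j + 1) t - X j t) - (X' (j + 1) t - X' j t)|
        ≤ M * (2 * t * Real.sqrt K) ^ (2 * j) / (Nat.factorial (2 * j) : ℝ)
            * Real.exp (2 * t * Real.sqrt K) ∧
      |derivWithin (X j) (Set.Ici 0) t - derivWithin (X' j) (Set.Ici 0) t|
        ≤ M * Real.sqrt (2 * K) *
            ((2 * t * Real.sqrt K) ^ (2 * j + 1) / (Nat.factorial (2 * j + 1) : ℝ)
                * Real.exp (2 * t * Real.sqrt K)
              + (2 * t * Real.sqrt K) ^ (2 * j - 1) / (Nat.factorial (2 * j - 1) : ℝ)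
                * Real.exp (2 * t * Real.sqrt K)) := by
  lift K to ℝ≥0 using (abs_nonneg _).trans (hK _ (hU 0 hN 0 self_mem_Ici).1)
  exact fun j hj hjN t ht ↦ gronwall_light_cone_estimate_general
    (isNewtonChain_of_contDiffOn (fun i _ hi ↦ (hsm i hi.le).1)
      fun i hi hiN ↦ heq i hi (Nat.le_sub_one_of_lt hiN))
    (isNewtonChain_of_contDiffOn (fun i _ hi ↦ (hsm i hi.le).2)
      fun i hi hiN ↦ heq' i hi (Nat.le_sub_one_of_lt hiN))
    (lipschitzOnWith_deriv_of_abs_deriv_deriv_le hW (convex_Ioo u₁ u₂) hK) hU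
    (fun s hs ↦ (hbdy s hs).1.trans (hbdy s hs).2.symm)
    (fun i hi hiN ↦ hinit i hi (Nat.le_sub_one_of_lt hiN)) hM hj (by omega) ht
end

section
/- No uniform l^∞ control without regularity of the initial data: consider the linear periodic chain, i.e. for each N ≥ 1 functions U^N_j, V^N_j : [0,∞) → ℝ indexed by j ∈ ℤ/2Nℤ satisfying (U^N_j)'(t) = V^N_{j+1}(t) − V^N_j(t) and (V^N_j)'(t) = U^N_j(t) − U^N_{j−1}(t) (the Newton chain with W(u) = u²/2 and periodic boundary conditions). For every τ₀ > 0 there exists, for each N, a choice of initial data with max_j |U^N_j(0)| ≤ 1 and max_j |V^N_j(0)| ≤ 1 such that max_j |U^N_j(N·τ₀)| → +∞ as N → ∞. -/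
open Set Filter

/-!
Bounded data can focus. The plane waves `U_j = cos (jθ + 2 sin (θ/2) t)`,
`V_j = cos ((j - 1/2)θ + 2 sin (θ/2) t)` solve the chain. Superpose `R + 1` of them with wave
numbers `θ_m = π + 2δm`, with phases aligned at site `0` and time `T = Nτ₀`, so that they add up to
`R + 1` there. At time `0` the phases are those of the waves at time `-T`; since
`2 sin (θ_m/2) = 2 cos (δm) ≈ 2 - (δm)²`, they are nearly quadratic in `m`, with leading
coefficient `γ = Tδ²`. Periodicity asks for `δ ∈ (π/2N)ℤ`, which for large `N` still allows `γ` to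
be of order `1/R`. Weyl differencing then bounds the superposition at time `0` by `o(R)`, uniformly
in the linear coefficient and hence in the site, so that its normalisation grows by an arbitrarily
large factor between the times `0` and `T`.
-/

open scoped Real InnerProductSpace

/-! ### Weyl sums -/

lemma norm_geom_sum_le {K : Type*} [NormedDivisionRing K] {w : K} (hw : ‖w‖ = 1) (hne : w ≠ 1)
    (n : ℕ) : ‖∑ k ∈ Finset.range n, w ^ k‖ ≤ 2 / ‖w - 1‖ := by
  rw [geom_sum_eq hne, norm_div]
  gcongr
  calc ‖w ^ n - 1‖ ≤ ‖w ^ n‖ + ‖(1 : K)‖ := norm_sub_le _ _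
    _ = 2 := by rw [norm_pow, hw, one_pow, norm_one, one_add_one_eq_two]

/-- Pairs of indices are grouped by their difference `h + 1`. -/
lemma sq_norm_sum_range_succ {𝕜 E : Type*} [RCLike 𝕜] [SeminormedAddCommGroup E]
    [InnerProductSpace 𝕜 E] (z : ℕ → E) (n : ℕ) :
    ‖∑ m ∈ Finset.range (n + 1), z m‖ ^ 2 = ∑ m ∈ Finset.range (n + 1), ‖z m‖ ^ 2 +
      2 * RCLike.re (∑ h ∈ Finset.range n, ∑ k ∈ Finset.range (n - h), ⟪z k, z (h + 1 + k)⟫_𝕜) := by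
  have hflip : ∑ h ∈ Finset.range n, ∑ k ∈ Finset.range (n - h), ⟪z k, z (h + 1 + k)⟫_𝕜 =
      ∑ m ∈ Finset.range n, ⟪∑ k ∈ Finset.range (m + 1), z k, z (m + 1)⟫_𝕜 := by
    rw [← Finset.sum_range_diag_flip n fun h k => ⟪z k, z (h + 1 + k)⟫_𝕜]
    refine Finset.sum_congr rfl fun m _ => ?_
    rw [sum_inner, ← Finset.sum_flip]
    refine Finset.sum_congr rfl fun h hh => ?_
    have hhm : h ≤ m := Finset.mem_range_succ_iff.1 hh
    rw [Nat.sub_sub_self hhm, show m - h + 1 + h = m + 1 by lia]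
  rw [hflip]
  clear hflip
  induction n with
  | zero => simp
  | succ n ih =>
    rw [Finset.sum_range_succ, norm_add_sq (𝕜 := 𝕜), ih, Finset.sum_range_succ _ (n + 1),
      Finset.sum_range_succ (fun m => ⟪_, z (m + 1)⟫_𝕜), map_add]
    ring

/-- The quadratic phase `e^{i(am + γm²)}`. The leading coefficient is `γ` and not `2πγ`. -/
noncomputable def quadPhase (a γ : ℝ) (m : ℕ) : ℂ :=
  Complex.exp ((a * m + γ * m ^ 2 : ℝ) * Complex.I)

lemma norm_quadPhase (a γ : ℝ) (m : ℕ) : ‖quadPhase a γ m‖ = 1 :=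
  Complex.norm_exp_ofReal_mul_I _

lemma inner_quadPhase_add (a γ : ℝ) (h k : ℕ) :
    ⟪quadPhase a γ k, quadPhase a γ (h + k)⟫_ℂ =
      quadPhase a γ h * Complex.exp (Complex.I * (2 * (γ * h) : ℝ)) ^ k := by
  rw [RCLike.inner_apply, quadPhase, quadPhase, quadPhase, ← Complex.exp_conj,
    ← Complex.exp_nat_mul, ← Complex.exp_add, ← Complex.exp_add]
  congr 1
  simp only [map_mul, Complex.conj_ofReal, Complex.conj_I]
  push_cast
  ring

lemma norm_sum_inner_quadPhase_le (a : ℝ) {γ : ℝ} {h : ℕ} (hγ : 0 < γ) (hh : 0 < h)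
    (hγh : γ * h ≤ π / 2) (n : ℕ) :
    ‖∑ k ∈ Finset.range n, ⟪quadPhase a γ k, quadPhase a γ (h + k)⟫_ℂ‖ ≤
      π / (2 * γ) * (h : ℝ)⁻¹ := by
  have hsin : 2 / π * (γ * h) ≤ Real.sin (γ * h) := Real.mul_le_sin (by positivity) hγh
  have hsin0 : 0 < Real.sin (γ * h) := lt_of_lt_of_le (by positivity) hsin
  set w := Complex.exp (Complex.I * (2 * (γ * h) : ℝ)) with hw
  have hw1 : ‖w - 1‖ = 2 * Real.sin (γ * h) := by
    rw [hw, Complex.norm_exp_I_mul_ofReal_sub_one, mul_div_cancel_left₀ _ two_ne_zero,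
      Real.norm_of_nonneg (by positivity)]
  have hne : w ≠ 1 := by
    rw [← sub_ne_zero, ← norm_pos_iff, hw1]
    positivity
  simp only [inner_quadPhase_add]
  rw [← Finset.mul_sum, norm_mul, norm_quadPhase, one_mul]
  calc ‖∑ k ∈ Finset.range n, w ^ k‖ ≤ 2 / (2 * Real.sin (γ * h)) :=
        hw1 ▸ norm_geom_sum_le (Complex.norm_exp_I_mul_ofReal _) hne n
    _ ≤ 2 / (2 * (2 / π * (γ * h))) := by gcongr
    _ = π / (2 * γ) * (h : ℝ)⁻¹ := by field_simp

/-- The quadratic exponential sum of length `n`. -/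
noncomputable def weylSum (a γ : ℝ) (n : ℕ) : ℂ :=
  ∑ m ∈ Finset.range n, quadPhase a γ m

lemma abs_sum_cos_quadratic_le (a b γ : ℝ) (n : ℕ) :
    |∑ m ∈ Finset.range n, Real.cos (b + a * m + γ * m ^ 2)| ≤ ‖weylSum a γ n‖ := by
  have hre : ∑ m ∈ Finset.range n, Real.cos (b + a * m + γ * m ^ 2) =
      (Complex.exp (b * Complex.I) * weylSum a γ n).re := by
    rw [weylSum, Finset.mul_sum, Complex.re_sum]
    refine Finset.sum_congr rfl fun m _ => ?_
    rw [quadPhase, ← Complex.exp_add, ← add_mul, ← Complex.ofReal_add,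
      Complex.exp_ofReal_mul_I_re, add_assoc]
  calc |∑ m ∈ Finset.range n, Real.cos (b + a * m + γ * m ^ 2)|
      ≤ ‖Complex.exp (b * Complex.I) * weylSum a γ n‖ := hre ▸ Complex.abs_re_le_norm _
    _ = ‖weylSum a γ n‖ := by rw [norm_mul, Complex.norm_exp_ofReal_mul_I, one_mul]

lemma sq_norm_weylSum_le (a : ℝ) {γ : ℝ} {n : ℕ} (hγ : 0 < γ) (hγn : γ * n ≤ π / 2) :
    ‖weylSum a γ (n + 1)‖ ^ 2 ≤ n + 1 + π / γ * (1 + Real.log n) := by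
  have hcorr : ∀ h ∈ Finset.range n, ‖∑ k ∈ Finset.range (n - h),
      ⟪quadPhase a γ k, quadPhase a γ (h + 1 + k)⟫_ℂ‖ ≤
      π / (2 * γ) * ((h + 1 : ℕ) : ℝ)⁻¹ := by
    intro h hh
    have hhn : h + 1 ≤ n := Finset.mem_range.1 hh
    exact norm_sum_inner_quadPhase_le a hγ h.succ_pos (le_trans (by gcongr) hγn) _
  have hharm : ∑ h ∈ Finset.range n, ((h + 1 : ℕ) : ℝ)⁻¹ ≤ 1 + Real.log n := by
    simpa [harmonic] using harmonic_le_one_add_log n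
  rw [weylSum, sq_norm_sum_range_succ (𝕜 := ℂ)]
  simp only [norm_quadPhase, one_pow, Finset.sum_const, Finset.card_range, nsmul_eq_mul, mul_one,
    Nat.cast_add_one]
  refine add_le_add_right ?_ _
  calc 2 * RCLike.re (∑ h ∈ Finset.range n, ∑ k ∈ Finset.range (n - h),
        ⟪quadPhase a γ k, quadPhase a γ (h + 1 + k)⟫_ℂ)
      ≤ 2 * ∑ h ∈ Finset.range n, π / (2 * γ) * ((h + 1 : ℕ) : ℝ)⁻¹ := by
        gcongr
        exact (RCLike.re_le_norm _).trans (norm_sum_le_of_le _ hcorr)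
    _ = π / γ * ∑ h ∈ Finset.range n, ((h + 1 : ℕ) : ℝ)⁻¹ := by
        rw [← Finset.mul_sum]
        field_simp
    _ ≤ π / γ * (1 + Real.log n) := by gcongr

lemma eventually_norm_weylSum_le {ε : ℝ} (hε : 0 < ε) :
    ∀ᶠ n : ℕ in atTop, ∀ a γ : ℝ, γ * n ∈ Icc (π / 8) (π / 2) →
      ‖weylSum a γ (n + 1)‖ ≤ ε * (n + 1) := by
  have hlog : (fun x : ℝ => 9 + 8 * Real.log x) =o[atTop] id :=
    (Asymptotics.isLittleO_const_id_atTop 9).add (Real.isLittleO_log_id_atTop.const_mul_left 8)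
  have hlog_le := tendsto_natCast_atTop_atTop.eventually (hlog.bound (pow_pos hε 2))
  filter_upwards [hlog_le, eventually_ge_atTop 1] with n hn hn1 a γ ⟨hγl, hγu⟩
  have hn0 : (0 : ℝ) < n := Nat.cast_pos.2 hn1
  have hγ : 0 < γ := pos_of_mul_pos_left (lt_of_lt_of_le (by positivity) hγl) hn0.le
  have hinv : π / γ ≤ 8 * n := by
    rw [div_le_iff₀ hγ]
    linarith
  have hlog0 : 0 ≤ Real.log n := Real.log_natCast_nonneg n
  rw [Real.norm_of_nonneg (by positivity), id, Real.norm_of_nonneg hn0.le] at hn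
  refine le_of_sq_le_sq ?_ (by positivity)
  calc ‖weylSum a γ (n + 1)‖ ^ 2 ≤ n + 1 + π / γ * (1 + Real.log n) := sq_norm_weylSum_le a hγ hγu
    _ ≤ n + 1 + 8 * n * (1 + Real.log n) := by gcongr
    _ ≤ (n + 1) * (9 + 8 * Real.log n) := by linarith
    _ ≤ (n + 1) * (ε ^ 2 * n) := by gcongr
    _ ≤ (ε * (n + 1)) ^ 2 := by nlinarith [mul_pos (pow_pos hε 2) (hn0.trans (lt_add_one (n : ℝ)))]

/-! ### Plane waves -/

/-- The plane wave with wave number `θ`, at a real site `x`: integer sites carry the components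
`U_j` of a solution of the chain, and the half-integers `j - 1/2` carry `V_j`. -/
noncomputable def planeWave (θ x t : ℝ) : ℝ :=
  Real.cos (x * θ + 2 * Real.sin (θ / 2) * t)

lemma hasDerivAt_planeWave (θ x t : ℝ) :
    HasDerivAt (planeWave θ x) (planeWave θ (x + 1 / 2) t - planeWave θ (x - 1 / 2) t) t := by
  have hphase : HasDerivAt (fun s => x * θ + 2 * Real.sin (θ / 2) * s)
      (2 * Real.sin (θ / 2)) t := by
    simpa using ((hasDerivAt_id t).const_mul (2 * Real.sin (θ / 2))).const_add (x * θ)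
  have hvalue : planeWave θ (x + 1 / 2) t - planeWave θ (x - 1 / 2) t =
      -Real.sin (x * θ + 2 * Real.sin (θ / 2) * t) * (2 * Real.sin (θ / 2)) := by
    rw [planeWave, planeWave, Real.cos_sub_cos]
    ring_nf
  rw [hvalue]
  exact hphase.cos

lemma planeWave_add_period (p : ℤ) {L : ℝ} (hL : L ≠ 0) (x t : ℝ) :
    planeWave (2 * π * p / L) (x + L) t = planeWave (2 * π * p / L) x t := by
  rw [planeWave, planeWave, ← Real.cos_add_int_mul_two_pi (x * _ + _) p]
  congr 1
  field_simp
  ring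

lemma abs_cos_sub_one_sub_sq_div_two_le (u : ℝ) : |Real.cos u - (1 - u ^ 2 / 2)| ≤ u ^ 4 / 2 := by
  rcases le_total |u| 1 with hu | hu
  · have := Real.cos_bound hu
    rw [Even.pow_abs (by decide)] at this
    nlinarith [sq_nonneg (u ^ 2)]
  · have hu2 : 1 ≤ u ^ 2 := one_le_sq_iff_one_le_abs _ |>.2 hu
    rw [abs_of_nonneg (sub_nonneg.2 Real.one_sub_sq_div_two_le_cos)]
    nlinarith [Real.cos_le_one u]

/-- Near `θ = π` the dispersion relation is `2 sin (θ/2) = 2 cos u = 2 - u² + O(u⁴)`. -/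
lemma abs_planeWave_sub_cos_quadratic_le {T : ℝ} (hT : 0 ≤ T) (u x : ℝ) :
    |planeWave (π + 2 * u) x (-T) - Real.cos (x * π - 2 * T + 2 * x * u + T * u ^ 2)| ≤
      T * u ^ 4 := by
  have hsin : Real.sin ((π + 2 * u) / 2) = Real.cos u := by
    rw [← Real.sin_add_pi_div_two]
    ring_nf
  calc _ ≤ |x * (π + 2 * u) + 2 * Real.cos u * -T - (x * π - 2 * T + 2 * x * u + T * u ^ 2)| := by
        rw [planeWave, hsin]
        exact Real.abs_cos_sub_cos_le _ _
    _ = 2 * T * |Real.cos u - (1 - u ^ 2 / 2)| := by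
        rw [← abs_of_nonneg (mul_nonneg zero_le_two hT), ← abs_mul, ← abs_neg,
          abs_of_nonneg (mul_nonneg zero_le_two hT)]
        ring_nf
    _ ≤ 2 * T * (u ^ 4 / 2) := by gcongr; exact abs_cos_sub_one_sub_sq_div_two_le u
    _ = T * u ^ 4 := by ring

/-! ### Wave packets -/

/-- Superposition of plane waves with wave numbers near `π`, all of which are in phase at the origin
of space and time. -/
noncomputable def wavePacket (δ : ℝ) (R : ℕ) (x t : ℝ) : ℝ :=
  ∑ m ∈ Finset.range (R + 1), planeWave (π + 2 * (δ * m)) x t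

lemma hasDerivAt_wavePacket (δ : ℝ) (R : ℕ) (x t : ℝ) :
    HasDerivAt (wavePacket δ R x)
      (wavePacket δ R (x + 1 / 2) t - wavePacket δ R (x - 1 / 2) t) t := by
  rw [wavePacket, wavePacket, ← Finset.sum_sub_distrib]
  exact HasDerivAt.fun_sum fun m _ => hasDerivAt_planeWave _ x t

lemma wavePacket_add_period (q R : ℕ) {N : ℕ} (hN : N ≠ 0) (x t : ℝ) :
    wavePacket (π * q / (2 * N)) R (x + 2 * N) t = wavePacket (π * q / (2 * N)) R x t := by
  refine Finset.sum_congr rfl fun m _ => ?_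
  have hN' : (N : ℝ) ≠ 0 := Nat.cast_ne_zero.2 hN
  have hθ : π + 2 * (π * q / (2 * N) * m) = 2 * π * (N + q * m : ℤ) / (2 * N) := by
    push_cast
    field_simp
  rw [hθ, planeWave_add_period _ (by positivity)]

lemma wavePacket_zero_zero (δ : ℝ) (R : ℕ) : wavePacket δ R 0 0 = R + 1 := by
  simp [wavePacket, planeWave]

lemma abs_wavePacket_neg_le {T : ℝ} (hT : 0 ≤ T) (δ : ℝ) (R : ℕ) (x : ℝ) :
    |wavePacket δ R x (-T)| ≤
      ‖weylSum (2 * x * δ) (T * δ ^ 2) (R + 1)‖ + (R + 1) * (T * (δ * R) ^ 4) := by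
  set Q := ∑ m ∈ Finset.range (R + 1),
    Real.cos (x * π - 2 * T + 2 * x * δ * m + T * δ ^ 2 * m ^ 2)
  have herr : |wavePacket δ R x (-T) - Q| ≤ (R + 1) * (T * (δ * R) ^ 4) := by
    rw [wavePacket, ← Finset.sum_sub_distrib]
    calc _ ≤ ∑ m ∈ Finset.range (R + 1), T * (δ * R) ^ 4 := ?_
      _ = (R + 1) * (T * (δ * R) ^ 4) := by simp
    refine (Finset.abs_sum_le_sum_abs _ _).trans (Finset.sum_le_sum fun m hm => ?_)
    have hmR : m ≤ R := Finset.mem_range_succ_iff.1 hm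
    have h := abs_planeWave_sub_cos_quadratic_le hT (δ * m) x
    rw [mul_pow δ, ← mul_assoc (2 * x), ← mul_assoc T] at h
    refine h.trans ?_
    rw [mul_pow, mul_pow]
    gcongr
  have hQ : |Q| ≤ ‖weylSum (2 * x * δ) (T * δ ^ 2) (R + 1)‖ := abs_sum_cos_quadratic_le _ _ _ _
  calc |wavePacket δ R x (-T)| ≤ |Q| + |wavePacket δ R x (-T) - Q| := by
        simpa using abs_add_le Q (wavePacket δ R x (-T) - Q)
    _ ≤ _ := add_le_add hQ herr

lemma exists_nat_sq_mem_Icc {y : ℝ} (hy : 1 ≤ y) : ∃ q : ℕ, (q : ℝ) ^ 2 ∈ Icc (y / 4) y := by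
  have hy0 : 0 ≤ y := zero_le_one.trans hy
  have hfloor : √y < ⌊√y⌋₊ + 1 := Nat.lt_floor_add_one _
  have hone : (1 : ℝ) ≤ ⌊√y⌋₊ := by
    exact_mod_cast (Nat.one_le_floor_iff _).2 (Real.one_le_sqrt.2 hy)
  refine ⟨⌊√y⌋₊, ?_, ?_⟩
  · calc y / 4 = (√y / 2) ^ 2 := by rw [div_pow, Real.sq_sqrt hy0]; norm_num
      _ ≤ (⌊√y⌋₊ : ℝ) ^ 2 := by gcongr; linarith
  · calc (⌊√y⌋₊ : ℝ) ^ 2 ≤ √y ^ 2 := by gcongr; exact Nat.floor_le (Real.sqrt_nonneg y)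
      _ = y := Real.sq_sqrt hy0

lemma eventually_exists_spacing {c τ : ℝ} (hc : 0 < c) (hτ : 0 < τ) :
    ∀ᶠ N : ℕ in atTop, ∃ q : ℕ, N * τ * (π * q / (2 * N)) ^ 2 ∈ Icc (c / 4) c := by
  have hy := (tendsto_natCast_atTop_atTop (R := ℝ)).const_mul_atTop
    (show 0 < 4 * c / (π ^ 2 * τ) by positivity)
  filter_upwards [hy.eventually_ge_atTop 1, eventually_gt_atTop 0] with N hN hN0
  obtain ⟨q, hq⟩ := exists_nat_sq_mem_Icc hN
  have hscale : N * τ * (π * q / (2 * N)) ^ 2 = π ^ 2 * τ / (4 * N) * q ^ 2 := by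
    field_simp
    ring
  have hinv : c = π ^ 2 * τ / (4 * N) * (4 * c / (π ^ 2 * τ) * N) := by field_simp
  refine ⟨q, ?_⟩
  rw [hscale, hinv, mul_div_assoc]
  exact ⟨by gcongr; exact hq.1, by gcongr; exact hq.2⟩

lemma exists_eventually_abs_wavePacket_le {ε τ : ℝ} (hε : 0 < ε) (hτ : 0 < τ) :
    ∃ R : ℕ, ∀ᶠ N : ℕ in atTop, ∃ q : ℕ, ∀ x : ℝ,
      |wavePacket (π * q / (2 * N)) R x (-(N * τ))| ≤ ε * (R + 1) := by
  obtain ⟨R, hweyl, hR⟩ :=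
    ((eventually_norm_weylSum_le (half_pos hε)).and (eventually_gt_atTop 0)).exists
  have hT := (tendsto_natCast_atTop_atTop (R := ℝ)).atTop_mul_const hτ
  refine ⟨R, ?_⟩
  filter_upwards [eventually_exists_spacing (show 0 < π / (2 * R) by positivity) hτ,
    hT.eventually_gt_atTop 0, hT.eventually_ge_atTop ((π / 2 * R) ^ 2 / (ε / 2))]
    with N ⟨q, hql, hqu⟩ hT0 hTlarge
  refine ⟨q, fun x => ?_⟩
  set T := N * τ
  set δ := π * q / (2 * N)
  have hγl : π / 8 ≤ T * δ ^ 2 * R := by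
    calc π / 8 = π / (2 * R) / 4 * R := by field_simp; norm_num
      _ ≤ T * δ ^ 2 * R := by gcongr
  have hγu : T * δ ^ 2 * R ≤ π / 2 := by
    calc T * δ ^ 2 * R ≤ π / (2 * R) * R := by gcongr
      _ = π / 2 := by field_simp
  have herr : T * (δ * R) ^ 4 ≤ ε / 2 := by
    calc T * (δ * R) ^ 4 = (T * δ ^ 2 * R * R) ^ 2 / T := by field_simp
      _ ≤ (π / 2 * R) ^ 2 / T := by gcongr
      _ ≤ ε / 2 := (div_le_comm₀ (by positivity) hT0).1 hTlarge
  calc |wavePacket δ R x (-T)|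
      ≤ ‖weylSum (2 * x * δ) (T * δ ^ 2) (R + 1)‖ + (R + 1) * (T * (δ * R) ^ 4) :=
        abs_wavePacket_neg_le hT0.le δ R x
    _ ≤ ε / 2 * (R + 1) + (R + 1) * (ε / 2) := by
        gcongr
        exact hweyl _ _ ⟨hγl, hγu⟩
    _ = ε * (R + 1) := by ring

/-! ### Focusing solutions of the chain -/

/-- A `2N`-periodic solution of the linear chain on `[0, ∞)` with initial data bounded by `1`. -/
def IsUnitSolution (N : ℕ) (u v : ℤ → ℝ → ℝ) : Prop :=
  (∀ (j : ℤ) (t : ℝ), u (j + 2 * (N : ℤ)) t = u j t ∧ v (j + 2 * (N : ℤ)) t = v j t) ∧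
  (∀ (j : ℤ), ∀ t ∈ Set.Ici (0 : ℝ),
    HasDerivWithinAt (u j) (v (j + 1) t - v j t) (Set.Ici 0) t ∧
    HasDerivWithinAt (v j) (u j t - u (j - 1) t) (Set.Ici 0) t) ∧
  (∀ j : ℤ, |u j 0| ≤ 1 ∧ |v j 0| ≤ 1)

lemma isUnitSolution_of_staggered {N : ℕ} {w : ℝ → ℝ → ℝ}
    (hperiod : ∀ x t, w (x + 2 * N) t = w x t)
    (hderiv : ∀ x t, HasDerivAt (w x) (w (x + 1 / 2) t - w (x - 1 / 2) t) t)
    (hbound : ∀ x, |w x 0| ≤ 1) :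
    IsUnitSolution N (fun j => w j) (fun j => w (j - 1 / 2)) := by
  refine ⟨fun j t => ⟨?_, ?_⟩, fun j t _ => ⟨?_, ?_⟩, fun j => ⟨hbound _, hbound _⟩⟩
  · simpa using hperiod j t
  · have h := hperiod (j - 1 / 2) t
    rw [sub_add_eq_add_sub] at h
    simpa using h
  · have hsite : ((j + 1 : ℤ) : ℝ) - 1 / 2 = j + 1 / 2 := by push_cast; ring
    simpa only [hsite] using (hderiv j t).hasDerivWithinAt
  · have hsite : (j : ℝ) - 1 / 2 - 1 / 2 = (j - 1 : ℤ) := by push_cast; ring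
    simpa only [hsite, sub_add_cancel] using (hderiv (j - 1 / 2) t).hasDerivWithinAt

lemma isUnitSolution_zero (N : ℕ) : IsUnitSolution N (fun _ _ => 0) (fun _ _ => 0) :=
  isUnitSolution_of_staggered (w := fun _ _ => 0) (by simp)
    (fun _ t => by simpa using hasDerivAt_const t (0 : ℝ)) (by simp)

lemma eventually_exists_isUnitSolution_le {τ : ℝ} (hτ : 0 < τ) (C : ℝ) :
    ∀ᶠ N : ℕ in atTop, ∃ s : (ℤ → ℝ → ℝ) × (ℤ → ℝ → ℝ),
      IsUnitSolution N s.1 s.2 ∧ C ≤ |s.1 0 (N * τ)| := by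
  wlog hC : 0 < C generalizing C
  · filter_upwards [this 1 one_pos] with N ⟨s, hs, hs1⟩
    exact ⟨s, hs, by linarith⟩
  obtain ⟨R, hR⟩ := exists_eventually_abs_wavePacket_le (inv_pos.2 hC) hτ
  filter_upwards [hR, eventually_ne_atTop 0] with N ⟨q, hq⟩ hN
  set w : ℝ → ℝ → ℝ := fun x t =>
    C / (R + 1) * wavePacket (π * q / (2 * N)) R x (t - N * τ) with hw
  have hperiod : ∀ x t, w (x + 2 * N) t = w x t := fun x t => by
    simp only [hw, wavePacket_add_period q R hN]
  have hderiv : ∀ x t, HasDerivAt (w x) (w (x + 1 / 2) t - w (x - 1 / 2) t) t := fun x t => by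
    simp only [hw, ← mul_sub]
    exact ((hasDerivAt_wavePacket _ R x _).comp_sub_const t _).const_mul _
  have hbound : ∀ x, |w x 0| ≤ 1 := fun x => by
    simp only [hw, zero_sub]
    rw [abs_mul, abs_of_pos (by positivity)]
    calc _ ≤ C / (R + 1) * (C⁻¹ * (R + 1)) := by gcongr; exact hq x
      _ = 1 := by field_simp
  refine ⟨(_, _), isUnitSolution_of_staggered hperiod hderiv hbound, ?_⟩
  simp only [Int.cast_zero, sub_self, wavePacket_zero_zero]
  rw [div_mul_cancel₀ _ (by positivity)]
  exact le_abs_self C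

/-! ### Passage to a single family -/

lemma exists_choice_tendsto_atTop {β α : Type*} [Preorder α] [(atTop : Filter α).NeBot]
    [(atTop : Filter α).IsCountablyGenerated] {p : ℕ → β → Prop} {f : ℕ → β → α}
    (hp : ∀ N, ∃ b, p N b) (hf : ∀ c, ∀ᶠ N in atTop, ∃ b, p N b ∧ c ≤ f N b) :
    ∃ b : ℕ → β, (∀ N, p N (b N)) ∧ Tendsto (fun N => f N (b N)) atTop atTop := by
  classical
  obtain ⟨c, hc⟩ := exists_seq_tendsto (atTop : Filter α)
  let level N := Nat.findGreatest (fun n => ∃ b, p N b ∧ c n ≤ f N b) N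
  have hlevel : Tendsto level atTop atTop := tendsto_atTop.2 fun n => by
    filter_upwards [hf (c n), eventually_ge_atTop n] with N hN hnN
    exact Nat.le_findGreatest hnN hN
  have hreach : ∀ N, ∃ b, p N b ∧ (level N ≠ 0 → c (level N) ≤ f N b) := fun N => by
    by_cases h : level N = 0
    · exact (hp N).imp fun b hb => ⟨hb, absurd h⟩
    · exact (Nat.findGreatest_of_ne_zero rfl h).imp fun b hb => ⟨hb.1, fun _ => hb.2⟩
  choose b hb hle using hreach
  refine ⟨b, hb, tendsto_atTop_mono' _ ?_ (hc.comp hlevel)⟩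
  filter_upwards [hlevel.eventually_ne_atTop 0] with N hN using hle N hN

lemma le_ciSup_of_mem_finset {ι α : Type*} [ConditionallyCompleteLattice α] {s : Finset ι}
    (f : ι → α) {i : ι} (hi : i ∈ s) : f i ≤ ⨆ j ∈ s, f j := by
  have : Nonempty α := ⟨f i⟩
  refine le_ciSup₂ (f := fun j (_ : j ∈ s) => f j) ((s.finite_toSet.image f).bddAbove.mono ?_) i hi
  rintro _ ⟨_, ⟨j, rfl⟩, hj, rfl⟩
  exact mem_image_of_mem f hj

/-- **No uniform `l^∞` control without regularity of the initial data.**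
For the linear periodic chain `(U_j)' = V_{j+1} − V_j`, `(V_j)' = U_j − U_{j−1}`
on `ℤ/2Nℤ`, for every `τ₀ > 0` there exist, for each `N ≥ 1`, solutions with
initial data bounded by `1` in `l^∞` whose gradient `max_j |U^N_j(Nτ₀)|` blows up
as `N → ∞`. -/
theorem no_uniform_linfty_bound (τ₀ : ℝ) (hτ₀ : 0 < τ₀) :
    ∃ U V : ℕ → ℤ → ℝ → ℝ,
      (∀ N : ℕ, 1 ≤ N →
        (∀ (j : ℤ) (t : ℝ),
          U N (j + 2 * (N : ℤ)) t = U N j t ∧ V N (j + 2 * (N : ℤ)) t = V N j t) ∧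
        (∀ (j : ℤ), ∀ t ∈ Set.Ici (0 : ℝ),
          HasDerivWithinAt (U N j) (V N (j + 1) t - V N j t) (Set.Ici 0) t ∧
          HasDerivWithinAt (V N j) (U N j t - U N (j - 1) t) (Set.Ici 0) t) ∧
        (∀ j : ℤ, |U N j 0| ≤ 1 ∧ |V N j 0| ≤ 1)) ∧
      Tendsto (fun N : ℕ =>
          ⨆ j ∈ Finset.range (2 * N), |U N (j : ℤ) ((N : ℝ) * τ₀)|)
        atTop atTop := by
  obtain ⟨s, hs, hgrowth⟩ := exists_choice_tendsto_atTop
    (p := fun N (s : (ℤ → ℝ → ℝ) × (ℤ → ℝ → ℝ)) => IsUnitSolution N s.1 s.2)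
    (fun N => ⟨(_, _), isUnitSolution_zero N⟩) (eventually_exists_isUnitSolution_le hτ₀)
  refine ⟨fun N => (s N).1, fun N => (s N).2, fun N _ => hs N, tendsto_atTop_mono' _ ?_ hgrowth⟩
  filter_upwards [eventually_gt_atTop 0] with N hN
  have h0 : 0 ∈ Finset.range (2 * N) := Finset.mem_range.2 (by positivity)
  exact le_ciSup_of_mem_finset (fun j : ℕ => |(s N).1 j (N * τ₀)|) h0
end

section
/- Dispersive decay for a single-bond perturbation in the linear periodic chain: for each N ≥ 1 let U^N_j, V^N_j : [0,∞) → ℝ, j ∈ ℤ/2Nℤ, satisfy (U^N_j)' = V^N_{j+1} − V^N_j and (V^N_j)' = U^N_j − U^N_{j−1}, with initial data U^N_j(0) = 1 if j = 0 and 0 otherwise, and V^N_j(0) = 0 for all j. Then for every τ > 0 there exists C > 0 (depending only on τ) such that max_j |U^N_j(N·τ)| ≤ C·N^{−1/7} for all N; in particular max_j |U^N_j(Nτ)| → 0 and max_j |V^N_j(Nτ)| → 0 as N → ∞. -/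
open Set Filter

/-!
Conservation of the energy `∑ (u² + v²)` over a period makes the solution unique, so that it
consists of half sums and half differences, at times `±t`, of explicit waves `W` obeying
`∂ₜW(κ) = W(κ + 1/2) - W(κ - 1/2)`. What has to be estimated at time `t = nσ` is therefore an
exponential sum `∑_{j<n} exp(i f(j))`, whose increments `g(j) = f(j+1) - f(j)` have the form
`A cos(π(2j+1)/2n) + β` with `A` of order one.

Put `D(j) = exp(i g(j)) - 1`, which varies by `O(1/n)` at each step. Summation by parts with
`conj D / (|D|² + s²)` in place of `1 / D` bounds the sum by `1/s + (O(1/n) + s²) ∑ 1/(|D|² + s²)`,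
with no monotonicity assumption on `g`. Only boundedly many multiples `2πm` are close to values of
`g`. Among the indices attached to one of them, let `k` minimise `|g(j) - 2πm|`; since a cosine is
quadratically injective on `[0, π]`, critical points included, `|g(j) - 2πm|` is at least of order
`((j - k)/n)²`. With `s` of order `n^(-1/2)` this makes `∑ 1/(|D|² + s²)` of order `n^(7/4)` and the
exponential sum of order `n^(3/4)`, which is a decay rate `n^(-1/4)`.
-/

section

open Real ComplexConjugate

/-! ### Summation by parts with a regularized inverse -/

/-- The Tikhonov regularization `conj z / (|z|² + s²)` of `z⁻¹`: it replaces division by a factor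
that may be close to zero, at the price of the defect `s² / (|z|² + s²)`. -/
noncomputable def regInv (s : ℝ) (z : ℂ) : ℂ := conj z / ((‖z‖ ^ 2 + s ^ 2 : ℝ) : ℂ)

lemma regInv_mul_self_add {s : ℝ} (hs : 0 < s) (z : ℂ) :
    regInv s z * z + ((s ^ 2 * (1 / (‖z‖ ^ 2 + s ^ 2)) : ℝ) : ℂ) = 1 := by
  have hden : ((‖z‖ ^ 2 + s ^ 2 : ℝ) : ℂ) ≠ 0 := by
    exact_mod_cast (show 0 < ‖z‖ ^ 2 + s ^ 2 by positivity).ne'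
  rw [regInv]
  push_cast at hden ⊢
  field_simp
  rw [Complex.conj_mul']

lemma norm_regInv_le {s : ℝ} (hs : 0 < s) (z : ℂ) : ‖regInv s z‖ ≤ 1 / (2 * s) := by
  have hden : 0 < ‖z‖ ^ 2 + s ^ 2 := by positivity
  rw [regInv, norm_div, Complex.norm_real, norm_of_nonneg hden.le, RCLike.norm_conj,
    div_le_div_iff₀ hden (by positivity)]
  nlinarith [sq_nonneg (‖z‖ - s)]

lemma regInv_sub_regInv {s : ℝ} (hs : 0 < s) (z w : ℂ) :
    regInv s z - regInv s w = (conj z * conj w * (w - z) + (s : ℂ) ^ 2 * conj (z - w)) /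
      (((‖z‖ ^ 2 + s ^ 2) * (‖w‖ ^ 2 + s ^ 2) : ℝ) : ℂ) := by
  have hden : ∀ x : ℂ, ((‖x‖ ^ 2 + s ^ 2 : ℝ) : ℂ) ≠ 0 := fun x => by
    exact_mod_cast (show 0 < ‖x‖ ^ 2 + s ^ 2 by positivity).ne'
  have hnorm : ∀ x : ℂ, ((‖x‖ ^ 2 + s ^ 2 : ℝ) : ℂ) = x * conj x + (s : ℂ) ^ 2 := fun x => by
    rw [Complex.mul_conj']
    push_cast
    ring
  rw [regInv, regInv, div_sub_div _ _ (hden z) (hden w), Complex.ofReal_mul, map_sub]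
  congr 1
  linear_combination conj z * hnorm w - conj w * hnorm z

lemma norm_regInv_sub_regInv_le {s : ℝ} (hs : 0 < s) (z w : ℂ) :
    ‖regInv s z - regInv s w‖
      ≤ ‖z - w‖ / 2 * (1 / (‖z‖ ^ 2 + s ^ 2) + 1 / (‖w‖ ^ 2 + s ^ 2)) := by
  have hnum : ‖conj z * conj w * (w - z) + (s : ℂ) ^ 2 * conj (z - w)‖
      ≤ ‖z - w‖ * (‖z‖ * ‖w‖ + s ^ 2) := by
    refine (norm_add_le _ _).trans_eq ?_
    simp only [norm_mul, norm_pow, RCLike.norm_conj, Complex.norm_real, norm_of_nonneg hs.le,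
      norm_sub_rev w z]
    ring
  have hamgm : ‖z‖ * ‖w‖ + s ^ 2 ≤ ((‖z‖ ^ 2 + s ^ 2) + (‖w‖ ^ 2 + s ^ 2)) / 2 := by
    linarith [two_mul_le_add_sq ‖z‖ ‖w‖]
  rw [regInv_sub_regInv hs, norm_div, Complex.norm_real, norm_of_nonneg (by positivity)]
  calc ‖conj z * conj w * (w - z) + (s : ℂ) ^ 2 * conj (z - w)‖
        / ((‖z‖ ^ 2 + s ^ 2) * (‖w‖ ^ 2 + s ^ 2))
      ≤ ‖z - w‖ * (((‖z‖ ^ 2 + s ^ 2) + (‖w‖ ^ 2 + s ^ 2)) / 2)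
        / ((‖z‖ ^ 2 + s ^ 2) * (‖w‖ ^ 2 + s ^ 2)) := by
        gcongr
        exact hnum.trans (by gcongr)
    _ = ‖z - w‖ / 2 * (1 / (‖z‖ ^ 2 + s ^ 2) + 1 / (‖w‖ ^ 2 + s ^ 2)) := by
        field_simp
        ring

lemma norm_sum_mul_sub_le {F : ℕ → ℂ} (hF : ∀ j, ‖F j‖ ≤ 1) (c : ℕ → ℂ) (n : ℕ) :
    ‖∑ j ∈ Finset.range n, c j * (F (j + 1) - F j)‖
      ≤ 2 * ‖c (n - 1)‖ + 2 * ∑ j ∈ Finset.range (n - 1), ‖c (j + 1) - c j‖ := by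
  have hdiff : ∀ j, ‖F j - F 0‖ ≤ 2 := fun j =>
    (norm_sub_le _ _).trans (by linarith [hF j, hF 0])
  have hmul : ∀ (a : ℂ) (j : ℕ), ‖a * (F j - F 0)‖ ≤ 2 * ‖a‖ := fun a j => by
    rw [norm_mul, mul_comm 2]
    gcongr
    exact hdiff j
  have hparts := Finset.sum_range_by_parts c (fun j => F (j + 1) - F j) n
  simp only [smul_eq_mul, Finset.sum_range_sub] at hparts
  rw [hparts, Finset.mul_sum]
  exact (norm_sub_le _ _).trans
    (add_le_add (hmul _ _) (norm_sum_le_of_le _ fun j _ => hmul _ _))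

lemma sum_range_pred_add_succ_le {a : ℕ → ℝ} (ha : ∀ j, 0 ≤ a j) (n : ℕ) :
    ∑ j ∈ Finset.range (n - 1), (a (j + 1) + a j) ≤ 2 * ∑ j ∈ Finset.range n, a j := by
  cases n with
  | zero => simp
  | succ n =>
    rw [Nat.add_sub_cancel, Finset.sum_add_distrib, two_mul]
    refine add_le_add ?_ ?_
    · rw [Finset.sum_range_succ' a]
      exact le_add_of_nonneg_right (ha 0)
    · exact Finset.sum_le_sum_of_subset_of_nonneg (Finset.range_mono n.le_succ) fun j _ _ => ha j

/-- Summation by parts after writing `F j = regInv s (D j) * (F (j + 1) - F j) + defect`. -/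
lemma norm_sum_le_of_sub_eq_mul {F D : ℕ → ℂ} {s δ : ℝ} (hs : 0 < s) (hF : ∀ j, ‖F j‖ ≤ 1)
    (hFD : ∀ j, F (j + 1) - F j = D j * F j) (hD : ∀ j, ‖D (j + 1) - D j‖ ≤ δ) (n : ℕ) :
    ‖∑ j ∈ Finset.range n, F j‖
      ≤ 1 / s + (2 * δ + s ^ 2) * ∑ j ∈ Finset.range n, 1 / (‖D j‖ ^ 2 + s ^ 2) := by
  have hδ : 0 ≤ δ := (norm_nonneg _).trans (hD 0)
  set c : ℕ → ℂ := fun j => regInv s (D j)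
  set a : ℕ → ℝ := fun j => 1 / (‖D j‖ ^ 2 + s ^ 2)
  have ha : ∀ j, 0 ≤ a j := fun j => by positivity
  have hsplit : ∑ j ∈ Finset.range n, F j = ∑ j ∈ Finset.range n, c j * (F (j + 1) - F j)
      + ∑ j ∈ Finset.range n, ((s ^ 2 * a j : ℝ) : ℂ) * F j := by
    rw [← Finset.sum_add_distrib]
    refine Finset.sum_congr rfl fun j _ => ?_
    linear_combination (-F j) * regInv_mul_self_add hs (D j) - c j * hFD j
  have hvar : ∑ j ∈ Finset.range (n - 1), ‖c (j + 1) - c j‖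
      ≤ δ * ∑ j ∈ Finset.range n, a j := by
    calc ∑ j ∈ Finset.range (n - 1), ‖c (j + 1) - c j‖
        ≤ ∑ j ∈ Finset.range (n - 1), δ / 2 * (a (j + 1) + a j) :=
          Finset.sum_le_sum fun j _ => (norm_regInv_sub_regInv_le hs _ _).trans
            (mul_le_mul_of_nonneg_right (by linarith [hD j]) (add_nonneg (ha _) (ha _)))
      _ ≤ δ / 2 * (2 * ∑ j ∈ Finset.range n, a j) := by
          rw [← Finset.mul_sum]
          gcongr
          exact sum_range_pred_add_succ_le ha n
      _ = δ * ∑ j ∈ Finset.range n, a j := by ring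
  have hdefect : ‖∑ j ∈ Finset.range n, ((s ^ 2 * a j : ℝ) : ℂ) * F j‖
      ≤ s ^ 2 * ∑ j ∈ Finset.range n, a j := by
    rw [Finset.mul_sum]
    refine norm_sum_le_of_le _ fun j _ => ?_
    have hsa : 0 ≤ s ^ 2 * a j := mul_nonneg (sq_nonneg s) (ha j)
    rw [norm_mul, Complex.norm_real, norm_of_nonneg hsa]
    exact mul_le_of_le_one_right hsa (hF j)
  have hbdry : 2 * ‖c (n - 1)‖ ≤ 1 / s := by
    calc 2 * ‖c (n - 1)‖ ≤ 2 * (1 / (2 * s)) := by gcongr; exact norm_regInv_le hs _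
      _ = 1 / s := by field_simp
  rw [hsplit]
  linarith [norm_add_le (∑ j ∈ Finset.range n, c j * (F (j + 1) - F j))
    (∑ j ∈ Finset.range n, ((s ^ 2 * a j : ℝ) : ℂ) * F j), norm_sum_mul_sub_le hF c n]

lemma norm_exp_I_mul_sub_exp_I_mul_le (x y : ℝ) :
    ‖Complex.exp (Complex.I * x) - Complex.exp (Complex.I * y)‖ ≤ |x - y| := by
  have hfactor : Complex.exp (Complex.I * x) - Complex.exp (Complex.I * y)
      = Complex.exp (Complex.I * y) * (Complex.exp (Complex.I * (x - y : ℝ)) - 1) := by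
    rw [mul_sub, ← Complex.exp_add]
    push_cast
    ring_nf
  rw [hfactor, norm_mul, Complex.norm_exp_I_mul_ofReal, one_mul]
  exact norm_exp_I_mul_ofReal_sub_one_le

lemma norm_sum_exp_le {f g : ℕ → ℝ} {s δ : ℝ} (hs : 0 < s) (hf : ∀ j, f (j + 1) = f j + g j)
    (hg : ∀ j, |g (j + 1) - g j| ≤ δ) (n : ℕ) :
    ‖∑ j ∈ Finset.range n, Complex.exp (Complex.I * f j)‖ ≤ 1 / s + (2 * δ + s ^ 2) *
      ∑ j ∈ Finset.range n, 1 / (‖Complex.exp (Complex.I * g j) - 1‖ ^ 2 + s ^ 2) := by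
  refine norm_sum_le_of_sub_eq_mul hs (fun j => (Complex.norm_exp_I_mul_ofReal _).le)
    (fun j => ?_) (fun j => ?_) n
  · rw [hf, Complex.ofReal_add, mul_add, Complex.exp_add]
    ring
  · rw [sub_sub_sub_cancel_right]
    exact (norm_exp_I_mul_sub_exp_I_mul_le _ _).trans (hg j)

/-! ### Resonances of quadratically separated sequences -/

lemma sum_one_div_add_sq_le {a : ℝ} (ha : 1 ≤ a) (n : ℕ) :
    ∑ i ∈ Finset.range n, 1 / ((i : ℝ) + a) ^ 2 ≤ 2 / a := by
  have hstep : ∀ i : ℕ, 1 / ((i : ℝ) + a) ^ 2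
      ≤ 1 / ((i : ℝ) + a - 1 / 2) - 1 / (((i + 1 : ℕ) : ℝ) + a - 1 / 2) := by
    intro i
    push_cast
    rw [div_sub_div _ _ (by linarith) (by linarith),
      div_le_div_iff₀ (by positivity) (mul_pos (by linarith) (by linarith))]
    nlinarith
  have hn : (0 : ℝ) ≤ 1 / ((n : ℝ) + a - 1 / 2) :=
    one_div_nonneg.2 (by linarith [(n.cast_nonneg : (0 : ℝ) ≤ n)])
  calc ∑ i ∈ Finset.range n, 1 / ((i : ℝ) + a) ^ 2
      ≤ 1 / (((0 : ℕ) : ℝ) + a - 1 / 2) - 1 / ((n : ℝ) + a - 1 / 2) := by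
        rw [← Finset.sum_range_sub' fun i : ℕ => 1 / ((i : ℝ) + a - 1 / 2)]
        exact Finset.sum_le_sum fun i _ => hstep i
    _ ≤ 1 / (a / 2) := by
        rw [Nat.cast_zero, zero_add]
        exact (sub_le_self _ hn).trans
          (one_div_le_one_div_of_le (by linarith) (by linarith))
    _ = 2 / a := by rw [one_div_div]

lemma sum_one_div_pow_four_add_le {a : ℝ} (ha : 1 ≤ a) (n : ℕ) :
    ∑ i ∈ Finset.range n, 1 / ((i : ℝ) ^ 4 + a ^ 4) ≤ 6 / a ^ 3 := by
  have hterm : ∀ i : ℕ, 1 / ((i : ℝ) ^ 4 + a ^ 4) ≤ 3 / a ^ 2 * (1 / ((i : ℝ) + a) ^ 2) := by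
    intro i
    rw [div_mul_div_comm, mul_one, div_le_div_iff₀ (by positivity) (by positivity), one_mul]
    nlinarith [sq_nonneg ((i : ℝ) ^ 2 - a ^ 2), sq_nonneg (a * ((i : ℝ) - a))]
  calc ∑ i ∈ Finset.range n, 1 / ((i : ℝ) ^ 4 + a ^ 4)
      ≤ 3 / a ^ 2 * ∑ i ∈ Finset.range n, 1 / ((i : ℝ) + a) ^ 2 := by
        rw [Finset.mul_sum]
        exact Finset.sum_le_sum fun i _ => hterm i
    _ ≤ 3 / a ^ 2 * (2 / a) := by gcongr; exact sum_one_div_add_sq_le ha n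
    _ = 6 / a ^ 3 := by field_simp; norm_num

lemma sum_range_comp_natDist_le {φ : ℕ → ℝ} (hφ : ∀ i, 0 ≤ φ i) {k n : ℕ} (hk : k < n) :
    ∑ j ∈ Finset.range n, φ (Nat.dist j k) ≤ 2 * ∑ i ∈ Finset.range n, φ i := by
  have hsub : ∀ m ≤ n, ∑ i ∈ Finset.range m, φ i ≤ ∑ i ∈ Finset.range n, φ i := fun m hm =>
    Finset.sum_le_sum_of_subset_of_nonneg (Finset.range_mono hm) fun i _ _ => hφ i
  have hleft : ∑ j ∈ Finset.range k, φ (Nat.dist j k) ≤ ∑ i ∈ Finset.range n, φ i := by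
    rw [← Finset.sum_range_reflect]
    calc ∑ j ∈ Finset.range k, φ (Nat.dist (k - 1 - j) k)
        = ∑ j ∈ Finset.range k, φ (j + 1) := Finset.sum_congr rfl fun j hj => by
          rw [Finset.mem_range] at hj
          rw [Nat.dist_eq_sub_of_le (by lia)]
          congr 1
          lia
      _ ≤ ∑ i ∈ Finset.range (k + 1), φ i := by
          rw [Finset.sum_range_succ']
          exact le_add_of_nonneg_right (hφ 0)
      _ ≤ ∑ i ∈ Finset.range n, φ i := hsub _ hk
  have hright : ∑ j ∈ Finset.range (n - k), φ (Nat.dist (k + j) k)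
      ≤ ∑ i ∈ Finset.range n, φ i := by
    simpa only [Nat.dist_eq_sub_of_le_right (Nat.le_add_right k _), Nat.add_sub_cancel_left]
      using hsub (n - k) (n.sub_le k)
  rw [← Nat.add_sub_of_le hk.le, Finset.sum_range_add, Nat.add_sub_of_le hk.le, two_mul]
  exact add_le_add hleft hright

lemma natCast_natDist_sq (j k : ℕ) : ((Nat.dist j k : ℕ) : ℝ) ^ 2 = ((j : ℝ) - k) ^ 2 := by
  rcases le_total j k with h | h
  · rw [Nat.dist_eq_sub_of_le h, Nat.cast_sub h, sub_sq_comm]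
  · rw [Nat.dist_eq_sub_of_le_right h, Nat.cast_sub h]

/-- If `y` is smallest at `k`, then `|y j| ≥ |y j - y k| / 2`, so that `|y|` grows at least
quadratically away from `k`. -/
lemma sum_one_div_sq_add_sq_le {s : Finset ℕ} {y : ℕ → ℝ} {c a : ℝ} (hc : 0 < c) (ha : 1 ≤ a)
    (hsep : ∀ j ∈ s, ∀ k ∈ s, c * ((j : ℝ) - k) ^ 2 ≤ |y j - y k|) :
    ∑ j ∈ s, 1 / (y j ^ 2 + (c * a ^ 2 / 2) ^ 2) ≤ 48 / (c ^ 2 * a ^ 3) := by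
  rcases s.eq_empty_or_nonempty with rfl | hs
  · rw [Finset.sum_empty]
    positivity
  obtain ⟨k, hks, hkmin⟩ := s.exists_min_image (fun j => |y j|) hs
  obtain ⟨n, hsn⟩ := s.exists_nat_subset_range
  set φ : ℕ → ℝ := fun i => 1 / ((i : ℝ) ^ 4 + a ^ 4)
  have hφ : ∀ i, 0 ≤ φ i := fun i => by positivity
  have hterm : ∀ j ∈ s, 1 / (y j ^ 2 + (c * a ^ 2 / 2) ^ 2) ≤ 4 / c ^ 2 * φ (Nat.dist j k) := by
    intro j hj
    have hgrowth : c / 2 * ((j : ℝ) - k) ^ 2 ≤ |y j| := by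
      linarith [hsep j hj k hks, abs_sub (y j) (y k), hkmin j hj]
    have hsq : (c / 2 * (Nat.dist j k : ℝ) ^ 2) ^ 2 ≤ y j ^ 2 := by
      rw [natCast_natDist_sq, ← sq_abs (y j)]
      gcongr
    rw [div_mul_div_comm, mul_one, div_le_div_iff₀ (by positivity) (by positivity)]
    linarith
  calc ∑ j ∈ s, 1 / (y j ^ 2 + (c * a ^ 2 / 2) ^ 2)
      ≤ ∑ j ∈ s, 4 / c ^ 2 * φ (Nat.dist j k) := Finset.sum_le_sum hterm
    _ ≤ ∑ j ∈ Finset.range n, 4 / c ^ 2 * φ (Nat.dist j k) :=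
        Finset.sum_le_sum_of_subset_of_nonneg hsn fun j _ _ => mul_nonneg (by positivity) (hφ _)
    _ ≤ 4 / c ^ 2 * (2 * (6 / a ^ 3)) := by
        rw [← Finset.mul_sum]
        gcongr
        exact (sum_range_comp_natDist_le hφ (Finset.mem_range.1 (hsn hks))).trans
          (by gcongr; exact sum_one_div_pow_four_add_le ha n)
    _ = 48 / (c ^ 2 * a ^ 3) := by field_simp; norm_num

lemma abs_sub_two_pi_mul_round_le_pi (x : ℝ) : |x - 2 * π * round (x / (2 * π))| ≤ π := by
  have hscale : x - 2 * π * round (x / (2 * π)) = 2 * π * (x / (2 * π) - round (x / (2 * π))) := by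
    field_simp
  rw [hscale, abs_mul, abs_of_pos two_pi_pos]
  linarith [mul_le_mul_of_nonneg_left (abs_sub_round (x / (2 * π))) two_pi_pos.le]

lemma abs_round_div_two_pi_le {x : ℝ} {K : ℕ} (hx : |x| ≤ 2 * π * K) :
    |round (x / (2 * π))| ≤ K := by
  have hround : 2 * π * |(round (x / (2 * π)) : ℝ)| < 2 * π * (K + 1) := by
    rw [← abs_of_pos two_pi_pos, ← abs_mul, abs_of_pos two_pi_pos]
    linarith [abs_sub_abs_le_abs_sub (2 * π * (round (x / (2 * π)) : ℝ)) x, pi_pos,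
      abs_sub_comm x (2 * π * (round (x / (2 * π)) : ℝ)), abs_sub_two_pi_mul_round_le_pi x]
  have hlt : |(round (x / (2 * π)) : ℝ)| < K + 1 := lt_of_mul_lt_mul_left hround two_pi_pos.le
  exact Int.lt_add_one_iff.1 (by exact_mod_cast hlt)

/-- Jordan's inequality converts the chord length into the distance of `x` to `2πℤ`. -/
lemma abs_sub_two_pi_mul_round_le (x : ℝ) :
    |x - 2 * π * round (x / (2 * π))| ≤ π / 2 * ‖Complex.exp (Complex.I * x) - 1‖ := by
  set m : ℤ := round (x / (2 * π))
  have hsin : |sin ((x - 2 * π * m) / 2)| = |sin (x / 2)| := by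
    rw [show (x - 2 * π * m) / 2 = x / 2 - m * π by ring, sin_sub_int_mul_pi, abs_mul, abs_zpow,
      abs_neg, abs_one, one_zpow, one_mul]
  have hjordan : 2 / π * |(x - 2 * π * m) / 2| ≤ |sin ((x - 2 * π * m) / 2)| :=
    mul_abs_le_abs_sin (by
      rw [abs_div, abs_two]
      linarith [abs_sub_two_pi_mul_round_le_pi x])
  rw [abs_div, abs_two, hsin] at hjordan
  rw [Complex.norm_exp_I_mul_ofReal_sub_one, norm_eq_abs, abs_mul, abs_two]
  calc |x - 2 * π * m| = π / 2 * (2 * (2 / π * (|x - 2 * π * m| / 2))) := by field_simp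
    _ ≤ π / 2 * (2 * |sin (x / 2)|) := by gcongr

/-- The indices are grouped according to the multiple of `2π` closest to `g j`. -/
lemma sum_one_div_norm_exp_sub_one_sq_add_sq_le {g : ℕ → ℝ} {c a : ℝ} {n K : ℕ} (hc : 0 < c)
    (ha : 1 ≤ a) (hK : ∀ j < n, |g j| ≤ 2 * π * K)
    (hsep : ∀ j < n, ∀ k < n, c * ((j : ℝ) - k) ^ 2 ≤ |g j - g k|) :
    ∑ j ∈ Finset.range n, 1 / (‖Complex.exp (Complex.I * g j) - 1‖ ^ 2 + (c * a ^ 2 / π) ^ 2)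
      ≤ (2 * K + 1) * (12 * π ^ 2 / (c ^ 2 * a ^ 3)) := by
  set m : ℕ → ℤ := fun j => round (g j / (2 * π))
  have hmaps : ∀ j ∈ Finset.range n, m j ∈ Finset.Icc (-K : ℤ) K := fun j hj =>
    Finset.mem_Icc.2 (abs_le.1 (abs_round_div_two_pi_le (hK j (Finset.mem_range.1 hj))))
  have hterm : ∀ j, 1 / (‖Complex.exp (Complex.I * g j) - 1‖ ^ 2 + (c * a ^ 2 / π) ^ 2)
      ≤ π ^ 2 / 4 * (1 / ((g j - 2 * π * m j) ^ 2 + (c * a ^ 2 / 2) ^ 2)) := by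
    intro j
    have hsq : (g j - 2 * π * m j) ^ 2
        ≤ (π / 2 * ‖Complex.exp (Complex.I * g j) - 1‖) ^ 2 := by
      rw [← sq_abs (g j - _)]
      gcongr
      exact abs_sub_two_pi_mul_round_le (g j)
    have hscale : (c * a ^ 2 / 2) ^ 2 = (π / 2) ^ 2 * (c * a ^ 2 / π) ^ 2 := by field_simp
    rw [mul_one_div, div_le_div_iff₀ (by positivity) (by positivity)]
    linarith
  have hfiber : ∀ l : ℤ, ∑ j ∈ Finset.range n with m j = l,
      1 / ((g j - 2 * π * m j) ^ 2 + (c * a ^ 2 / 2) ^ 2) ≤ 48 / (c ^ 2 * a ^ 3) := by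
    refine fun l => sum_one_div_sq_add_sq_le hc ha fun j hj k hk => ?_
    simp only [Finset.mem_filter, Finset.mem_range] at hj hk
    rw [hj.2, hk.2, sub_sub_sub_cancel_right]
    exact hsep j hj.1 k hk.1
  have hcard : ((Finset.Icc (-K : ℤ) K).card : ℝ) = 2 * K + 1 := by
    rw [Int.card_Icc, show ((K : ℤ) + 1 - -K).toNat = 2 * K + 1 by lia]
    push_cast
    ring
  calc ∑ j ∈ Finset.range n, 1 / (‖Complex.exp (Complex.I * g j) - 1‖ ^ 2 + (c * a ^ 2 / π) ^ 2)
      ≤ π ^ 2 / 4 * ∑ j ∈ Finset.range n,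
          1 / ((g j - 2 * π * m j) ^ 2 + (c * a ^ 2 / 2) ^ 2) := by
        rw [Finset.mul_sum]
        exact Finset.sum_le_sum fun j _ => hterm j
    _ ≤ π ^ 2 / 4 * ((2 * K + 1) * (48 / (c ^ 2 * a ^ 3))) := by
        rw [← Finset.sum_fiberwise_of_maps_to hmaps, ← hcard, ← nsmul_eq_mul]
        gcongr
        exact Finset.sum_le_card_nsmul _ _ _ fun l _ => hfiber l
    _ = (2 * K + 1) * (12 * π ^ 2 / (c ^ 2 * a ^ 3)) := by field_simp; norm_num

/-! ### Phases of the lattice waves -/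

/-- The phase `2 t sin θ + 2 κ θ`, at the wave number `θ = π j / n`, of a travelling wave on
`ℤ/nℤ` with dispersion relation `ω = 2 sin θ`, at time `t` and site `κ`. -/
noncomputable def wavePhase (n : ℕ) (κ t : ℝ) (j : ℕ) : ℝ :=
  2 * t * sin (π * j / n) + 2 * κ * (π * j / n)

/-- The increment `wavePhase n κ t (j + 1) - wavePhase n κ t j`, in the product form in which its
stationary points are visible. -/
noncomputable def wavePhaseStep (n : ℕ) (κ t : ℝ) (j : ℕ) : ℝ :=
  4 * t * sin (π / (2 * n)) * cos (π * (2 * j + 1) / (2 * n)) + 2 * κ * (π / n)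

lemma wavePhase_succ (n : ℕ) (κ t : ℝ) (j : ℕ) :
    wavePhase n κ t (j + 1) = wavePhase n κ t j + wavePhaseStep n κ t j := by
  have hsin := sin_sub_sin (π * (j + 1 : ℕ) / n) (π * j / n)
  rw [show (π * (j + 1 : ℕ) / n - π * j / n) / 2 = π / (2 * n) by push_cast; ring,
    show (π * (j + 1 : ℕ) / n + π * j / n) / 2 = π * (2 * j + 1) / (2 * n) by push_cast; ring]
    at hsin
  rw [wavePhase, wavePhase, wavePhaseStep, eq_add_of_sub_eq hsin]
  push_cast
  ring

lemma abs_four_mul_sin_le (n : ℕ) (t : ℝ) : |4 * t * sin (π / (2 * n))| ≤ 2 * π * |t| / n := by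
  rw [abs_mul, abs_mul, abs_of_pos (by norm_num : (0 : ℝ) < 4)]
  calc 4 * |t| * |sin (π / (2 * n))| ≤ 4 * |t| * |π / (2 * n)| :=
        mul_le_mul_of_nonneg_left abs_sin_le_abs (by positivity)
    _ = 2 * π * |t| / n := by
        rw [abs_of_nonneg (show 0 ≤ π / (2 * n) by positivity)]
        ring

lemma le_abs_four_mul_sin {n : ℕ} (hn : 1 ≤ n) (t : ℝ) :
    4 * |t| / n ≤ |4 * t * sin (π / (2 * n))| := by
  have hn' : (1 : ℝ) ≤ n := by exact_mod_cast hn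
  have hjordan : 2 / π * (π / (2 * n)) ≤ sin (π / (2 * n)) :=
    mul_le_sin (by positivity) (div_le_div_of_nonneg_left pi_pos.le two_pos (by linarith))
  rw [abs_mul, abs_mul, abs_of_pos (by norm_num : (0 : ℝ) < 4)]
  calc 4 * |t| / n = 4 * |t| * (2 / π * (π / (2 * n))) := by field_simp
    _ ≤ 4 * |t| * |sin (π / (2 * n))| := by
        gcongr
        exact hjordan.trans (le_abs_self _)

lemma abs_wavePhaseStep_le (n : ℕ) (κ t : ℝ) (j : ℕ) :
    |wavePhaseStep n κ t j| ≤ 2 * π * (|t| + |κ|) / n := by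
  have hcos : |4 * t * sin (π / (2 * n)) * cos (π * (2 * j + 1) / (2 * n))|
      ≤ 2 * π * |t| / n := by
    rw [abs_mul]
    exact (mul_le_of_le_one_right (abs_nonneg _) (abs_cos_le_one _)).trans
      (abs_four_mul_sin_le n t)
  have hκ : |2 * κ * (π / n)| = 2 * π * |κ| / n := by
    rw [abs_mul, abs_mul, abs_two, abs_of_nonneg (show 0 ≤ π / n by positivity)]
    ring
  calc |wavePhaseStep n κ t j| ≤ 2 * π * |t| / n + 2 * π * |κ| / n :=
        (abs_add_le _ _).trans (add_le_add hcos hκ.le)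
    _ = 2 * π * (|t| + |κ|) / n := by ring

lemma abs_wavePhaseStep_sub (n : ℕ) (κ t : ℝ) (j k : ℕ) :
    |wavePhaseStep n κ t j - wavePhaseStep n κ t k| = |4 * t * sin (π / (2 * n))| *
      |cos (π * (2 * j + 1) / (2 * n)) - cos (π * (2 * k + 1) / (2 * n))| := by
  rw [wavePhaseStep, wavePhaseStep, add_sub_add_right_eq_sub, ← mul_sub, abs_mul]

lemma abs_wavePhaseStep_succ_sub_le (n : ℕ) (κ t : ℝ) (j : ℕ) :
    |wavePhaseStep n κ t (j + 1) - wavePhaseStep n κ t j| ≤ 2 * π ^ 2 * |t| / n ^ 2 := by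
  rw [abs_wavePhaseStep_sub]
  calc |4 * t * sin (π / (2 * n))| *
        |cos (π * (2 * (j + 1 : ℕ) + 1) / (2 * n)) - cos (π * (2 * j + 1) / (2 * n))|
      ≤ 2 * π * |t| / n *
        |π * (2 * (j + 1 : ℕ) + 1) / (2 * n) - π * (2 * j + 1) / (2 * n)| :=
        mul_le_mul (abs_four_mul_sin_le n t) (abs_cos_sub_cos_le _ _) (abs_nonneg _)
          (by positivity)
    _ = 2 * π * |t| / n * (π / n) := by
        rw [show π * (2 * (j + 1 : ℕ) + 1) / (2 * n) - π * (2 * j + 1) / (2 * n) = π / n by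
          push_cast; ring, abs_of_nonneg (show 0 ≤ π / n by positivity)]
    _ = 2 * π ^ 2 * |t| / n ^ 2 := by ring

/-- The quadratic lower bound holds up to the critical points `0` and `π` of the cosine. -/
lemma two_mul_sq_le_cos_sub_cos {x y : ℝ} (hx : 0 ≤ x) (hxy : x ≤ y) (hy : y ≤ π) :
    2 * ((y - x) / π) ^ 2 ≤ cos x - cos y := by
  have hprod : cos x - cos y = 2 * sin ((x + y) / 2) * sin ((y - x) / 2) := by
    rw [cos_sub_cos, show (x - y) / 2 = -((y - x) / 2) by ring, sin_neg]
    ring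
  have hjordan : (y - x) / π ≤ sin ((y - x) / 2) := by
    calc (y - x) / π = 2 / π * ((y - x) / 2) := by ring
      _ ≤ sin ((y - x) / 2) := mul_le_sin (by linarith) (by linarith)
  have hmid : sin ((y - x) / 2) ≤ sin ((x + y) / 2) := by
    have hdiff : sin ((x + y) / 2) - sin ((y - x) / 2) = 2 * sin (x / 2) * cos (y / 2) := by
      rw [sin_sub_sin]
      ring_nf
    have hsin : 0 ≤ sin (x / 2) := sin_nonneg_of_nonneg_of_le_pi (by linarith) (by linarith)
    have hcos : 0 ≤ cos (y / 2) := cos_nonneg_of_mem_Icc ⟨by linarith, by linarith⟩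
    linarith [mul_nonneg hsin hcos]
  have hnonneg : 0 ≤ (y - x) / π := div_nonneg (by linarith) pi_pos.le
  calc 2 * ((y - x) / π) ^ 2 = 2 * ((y - x) / π) * ((y - x) / π) := by ring
    _ ≤ 2 * sin ((x + y) / 2) * sin ((y - x) / 2) := by
        gcongr
        · linarith
        · exact hjordan.trans hmid
    _ = cos x - cos y := hprod.symm

lemma two_mul_sq_le_abs_cos_sub_cos {x y : ℝ} (hx : x ∈ Icc 0 π) (hy : y ∈ Icc 0 π) :
    2 * ((x - y) / π) ^ 2 ≤ |cos x - cos y| := by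
  wlog hxy : x ≤ y generalizing x y
  · have hswap := this hy hx (le_of_not_ge hxy)
    rwa [abs_sub_comm, ← neg_sub y x, neg_div, neg_sq]
  · rw [← neg_sub y x, neg_div, neg_sq]
    exact (two_mul_sq_le_cos_sub_cos hx.1 hxy hy.2).trans (le_abs_self _)

lemma mul_sq_le_abs_wavePhaseStep_sub {n : ℕ} (κ t : ℝ) {j k : ℕ} (hj : j < n) (hk : k < n) :
    8 * |t| / n ^ 3 * ((j : ℝ) - k) ^ 2 ≤ |wavePhaseStep n κ t j - wavePhaseStep n κ t k| := by
  have hn : (0 : ℝ) < n := by exact_mod_cast (Nat.zero_le j).trans_lt hj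
  have hangle : ∀ i < n, π * (2 * (i : ℝ) + 1) / (2 * n) ∈ Icc 0 π := by
    refine fun i hi => ⟨by positivity, ?_⟩
    have hi' : (i : ℝ) + 1 ≤ n := by exact_mod_cast hi
    rw [div_le_iff₀ (by positivity)]
    gcongr
    linarith
  rw [abs_wavePhaseStep_sub]
  calc 8 * |t| / n ^ 3 * ((j : ℝ) - k) ^ 2
      = 4 * |t| / n *
        (2 * ((π * (2 * j + 1) / (2 * n) - π * (2 * k + 1) / (2 * n)) / π) ^ 2) := by
        field_simp
        ring
    _ ≤ |4 * t * sin (π / (2 * n))| *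
        |cos (π * (2 * j + 1) / (2 * n)) - cos (π * (2 * k + 1) / (2 * n))| :=
        mul_le_mul (le_abs_four_mul_sin (by lia) t)
          (two_mul_sq_le_abs_cos_sub_cos (hangle j hj) (hangle k hk)) (by positivity)
          (abs_nonneg _)

/-- `x` stands for `n ^ (1 / 4)`, which makes all the powers of `n` involved integral. -/
lemma norm_sum_exp_wavePhase_le {n K : ℕ} {σ κ x : ℝ} (hσ : σ ≠ 0) (hκ : |κ| ≤ n)
    (hK : |σ| + 1 ≤ K) (hx : 1 ≤ x) (hxn : x ^ 4 = n) :
    ‖∑ j ∈ Finset.range n, Complex.exp (Complex.I * wavePhase n κ (n * σ) j)‖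
      ≤ (π / (8 * |σ|) + (2 * K + 1) * (3 * π ^ 4 / (4 * |σ|) + 12)) * x ^ 3 := by
  have hn : (0 : ℝ) < n := hxn ▸ by positivity
  have ht : |n * σ| = n * |σ| := by rw [abs_mul, Nat.abs_cast]
  set c : ℝ := 8 * |n * σ| / n ^ 3 with hc
  set s : ℝ := c * (x ^ 3) ^ 2 / π with hs
  have hc' : c = 8 * |σ| / x ^ 8 := by rw [hc, ht, ← hxn]; field_simp
  have hs' : s = 8 * |σ| / (π * x ^ 2) := by rw [hs, hc']; field_simp
  have hrange : ∀ j < n, |wavePhaseStep n κ (n * σ) j| ≤ 2 * π * K := by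
    intro j _
    refine (abs_wavePhaseStep_le n κ (n * σ) j).trans ?_
    rw [div_le_iff₀ hn, ht, mul_assoc _ (K : ℝ)]
    refine mul_le_mul_of_nonneg_left ?_ two_pi_pos.le
    nlinarith
  have hresonance := sum_one_div_norm_exp_sub_one_sq_add_sq_le (c := c) (a := x ^ 3)
    (by rw [hc']; positivity) (one_le_pow₀ hx) hrange
    fun j hj k hk => mul_sq_le_abs_wavePhaseStep_sub κ (n * σ) hj hk
  calc ‖∑ j ∈ Finset.range n, Complex.exp (Complex.I * wavePhase n κ (n * σ) j)‖
      ≤ 1 / s + (2 * (2 * π ^ 2 * |n * σ| / n ^ 2) + s ^ 2) *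
          ((2 * K + 1) * (12 * π ^ 2 / (c ^ 2 * (x ^ 3) ^ 3))) :=
        (norm_sum_exp_le (s := s) (by rw [hs']; positivity) (wavePhase_succ n κ (n * σ))
          (abs_wavePhaseStep_succ_sub_le n κ (n * σ)) n).trans (by gcongr)
    _ = π / (8 * |σ|) * x ^ 2 + (2 * K + 1) * (3 * π ^ 4 / (4 * |σ|) + 12) * x ^ 3 := by
        rw [hs', hc', ht, ← hxn]
        field_simp
        ring
    _ ≤ π / (8 * |σ|) * x ^ 3 + (2 * K + 1) * (3 * π ^ 4 / (4 * |σ|) + 12) * x ^ 3 := by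
        gcongr ?_ * ?_ + _
        exact pow_le_pow_right₀ hx (by norm_num)
    _ = (π / (8 * |σ|) + (2 * K + 1) * (3 * π ^ 4 / (4 * |σ|) + 12)) * x ^ 3 := by ring

/-- The average over the wave numbers of `ℤ/nℤ` of the travelling waves with phase `wavePhase`.
Evaluated at integers and half-integers `κ`, at times `t` and `-t`, it yields the solutions of the
chain (`bondWave`, `velocityWave`). -/
noncomputable def latticeWave (n : ℕ) (κ t : ℝ) : ℝ :=
  1 / n * ∑ j ∈ Finset.range n, cos (wavePhase n κ t j)

lemma latticeWave_periodic {n : ℕ} (hn : 1 ≤ n) (t : ℝ) :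
    Function.Periodic (fun κ => latticeWave n κ t) n := by
  intro κ
  have hn' : (n : ℝ) ≠ 0 := by positivity
  simp only [latticeWave, wavePhase]
  congr 1
  refine Finset.sum_congr rfl fun j _ => ?_
  rw [← cos_add_nat_mul_two_pi (2 * t * sin (π * j / n) + 2 * κ * (π * j / n)) j]
  congr 1
  field_simp
  ring

lemma exists_abs_latticeWave_le {σ : ℝ} (hσ : σ ≠ 0) :
    ∃ C > 0, ∀ n : ℕ, 1 ≤ n → ∀ κ : ℝ,
      |latticeWave n κ (n * σ)| ≤ C * (n : ℝ) ^ (-(1 / 4) : ℝ) := by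
  set C : ℝ := π / (8 * |σ|) + (2 * ⌈|σ| + 1⌉₊ + 1) * (3 * π ^ 4 / (4 * |σ|) + 12)
  refine ⟨C, by positivity, fun n hn κ₀ => ?_⟩
  have hn' : (1 : ℝ) ≤ n := by exact_mod_cast hn
  obtain ⟨κ, hκ, hκ₀⟩ := (latticeWave_periodic hn (n * σ)).exists_mem_Ico₀ (by linarith) κ₀
  set x : ℝ := (n : ℝ) ^ (1 / 4 : ℝ)
  have hx : 1 ≤ x := one_le_rpow hn' (by norm_num)
  have hxn : x ^ 4 = n := by
    rw [← rpow_natCast, ← rpow_mul (by positivity)]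
    norm_num
  have hre : |∑ j ∈ Finset.range n, cos (wavePhase n κ (n * σ) j)|
      ≤ ‖∑ j ∈ Finset.range n, Complex.exp (Complex.I * wavePhase n κ (n * σ) j)‖ := by
    refine le_of_eq_of_le ?_ (Complex.abs_re_le_norm _)
    simp only [Complex.re_sum, mul_comm Complex.I, Complex.exp_ofReal_mul_I_re]
  have hsum := hre.trans (norm_sum_exp_wavePhase_le hσ
    (abs_le.2 ⟨by linarith [hκ.1], hκ.2.le⟩) (Nat.le_ceil _) hx hxn)
  calc |latticeWave n κ₀ (n * σ)|
      = 1 / x ^ 4 * |∑ j ∈ Finset.range n, cos (wavePhase n κ (n * σ) j)| := by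
        rw [hκ₀, latticeWave, abs_mul, hxn, abs_of_nonneg (show 0 ≤ 1 / (n : ℝ) by positivity)]
    _ ≤ 1 / x ^ 4 * (C * x ^ 3) := by gcongr
    _ = C * x⁻¹ := by field_simp
    _ = C * (n : ℝ) ^ (-(1 / 4) : ℝ) := by rw [← rpow_neg (by positivity)]

/-- The dispersion relation `ω = 2 sin θ` of `wavePhase` is the one of this half-step equation. -/
lemma hasDerivAt_latticeWave (n : ℕ) (κ t : ℝ) :
    HasDerivAt (latticeWave n κ) (latticeWave n (κ + 1 / 2) t - latticeWave n (κ - 1 / 2) t) t := by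
  have hphase : ∀ j, HasDerivAt (fun t => wavePhase n κ t j) (2 * sin (π * j / n)) t := fun j => by
    simpa only [wavePhase, mul_one, mul_right_comm] using
      (((hasDerivAt_id' t).const_mul 2).mul_const (sin (π * j / n))).add_const
        (2 * κ * (π * j / n))
  have hderiv : HasDerivAt (latticeWave n κ) (1 / n * ∑ j ∈ Finset.range n,
      -sin (wavePhase n κ t j) * (2 * sin (π * j / n))) t :=
    (HasDerivAt.fun_sum fun j _ => (hphase j).cos).const_mul _
  refine hderiv.congr_deriv ?_
  rw [latticeWave, latticeWave, ← mul_sub, ← Finset.sum_sub_distrib]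
  congr 1
  refine Finset.sum_congr rfl fun j _ => ?_
  rw [show wavePhase n (κ + 1 / 2) t j = wavePhase n κ t j + π * j / n by
      rw [wavePhase, wavePhase]; ring,
    show wavePhase n (κ - 1 / 2) t j = wavePhase n κ t j - π * j / n by
      rw [wavePhase, wavePhase]; ring, cos_add, cos_sub]
  ring

/-- Orthogonality of the characters of `ℤ/nℤ`. -/
lemma latticeWave_intCast_zero {n : ℕ} (hn : 1 ≤ n) (k : ℤ) :
    latticeWave n k 0 = if k % n = 0 then 1 else 0 := by
  have hn' : (n : ℂ) ≠ 0 := by exact_mod_cast (by lia : n ≠ 0)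
  have hroot := Complex.isPrimitiveRoot_exp n (by lia)
  set ζ : ℂ := Complex.exp (2 * π * Complex.I / n) with hζ
  have hcos : ∀ j : ℕ, cos (wavePhase n k 0 j) = ((ζ ^ k) ^ j).re := by
    intro j
    rw [hζ, ← Complex.exp_int_mul, ← Complex.exp_nat_mul, ← Complex.exp_ofReal_mul_I_re, wavePhase]
    congr 2
    push_cast
    ring
  have hre : latticeWave n k 0 = 1 / n * (∑ j ∈ Finset.range n, (ζ ^ k) ^ j).re := by
    rw [latticeWave, Complex.re_sum, Finset.sum_congr rfl fun j _ => hcos j]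
  have hone : ζ ^ k = 1 ↔ k % n = 0 := by
    rw [hroot.zpow_eq_one_iff_dvd, Int.dvd_iff_emod_eq_zero]
  rw [hre]
  split_ifs with hk
  · rw [hone.2 hk]
    simp only [one_pow, Finset.sum_const, Finset.card_range, nsmul_eq_mul, mul_one,
      Complex.natCast_re]
    exact one_div_mul_cancel (by exact_mod_cast hn')
  · have hpow : (ζ ^ k) ^ n = 1 := by
      rw [← zpow_natCast, zpow_comm, zpow_natCast, hroot.pow_eq_one, one_zpow]
    rw [geom_sum_eq (mt hone.1 hk), hpow, sub_self, zero_div, Complex.zero_re, mul_zero]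

/-! ### The linear chain -/

/-- The first-order form of the linear chain `X_j'' = X_{j+1} - 2 X_j + X_{j-1}` on `ℤ/nℤ` for
times `t ≥ 0`, with bond variables `u j = X_{j+1} - X_j` and velocities `v j = X_j'`. Sites are
integers, and `ℤ/nℤ` is encoded by periodicity. -/
structure IsChainSolution (n : ℕ) (u v : ℤ → ℝ → ℝ) : Prop where
  bond_periodic : ∀ j t, 0 ≤ t → u (j + n) t = u j t
  velocity_periodic : ∀ j t, 0 ≤ t → v (j + n) t = v j t
  hasDerivWithinAt_bond : ∀ j t, 0 ≤ t →
    HasDerivWithinAt (u j) (v (j + 1) t - v j t) (Ici 0) t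
  hasDerivWithinAt_velocity : ∀ j t, 0 ≤ t →
    HasDerivWithinAt (v j) (u j t - u (j - 1) t) (Ici 0) t

namespace IsChainSolution

variable {n : ℕ} {u v u' v' : ℤ → ℝ → ℝ}

lemma sub (h : IsChainSolution n u v) (h' : IsChainSolution n u' v') :
    IsChainSolution n (fun j t => u j t - u' j t) (fun j t => v j t - v' j t) where
  bond_periodic j t ht := by rw [h.bond_periodic j t ht, h'.bond_periodic j t ht]
  velocity_periodic j t ht := by rw [h.velocity_periodic j t ht, h'.velocity_periodic j t ht]
  hasDerivWithinAt_bond j t ht :=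
    ((h.hasDerivWithinAt_bond j t ht).fun_sub (h'.hasDerivWithinAt_bond j t ht)).congr_deriv
      (by ring)
  hasDerivWithinAt_velocity j t ht :=
    ((h.hasDerivWithinAt_velocity j t ht).fun_sub
      (h'.hasDerivWithinAt_velocity j t ht)).congr_deriv (by ring)

lemma hasDerivWithinAt_energy (h : IsChainSolution n u v) (k : ℤ) {t : ℝ} (ht : 0 ≤ t) :
    HasDerivWithinAt (fun t => ∑ i ∈ Finset.range n, (u (k + i) t ^ 2 + v (k + i) t ^ 2)) 0
      (Ici 0) t := by
  set flux : ℕ → ℝ := fun i => 2 * (u (k + i - 1) t * v (k + i) t)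
  have hderiv : HasDerivWithinAt
      (fun t => ∑ i ∈ Finset.range n, (u (k + i) t ^ 2 + v (k + i) t ^ 2))
      (∑ i ∈ Finset.range n, (flux (i + 1) - flux i)) (Ici 0) t := by
    refine HasDerivWithinAt.fun_sum fun i _ =>
      (((h.hasDerivWithinAt_bond (k + i) t ht).fun_pow 2).fun_add
        ((h.hasDerivWithinAt_velocity (k + i) t ht).fun_pow 2)).congr_deriv ?_
    simp only [flux, Nat.cast_succ, ← add_assoc, add_sub_cancel_right]
    push_cast
    ring
  refine hderiv.congr_deriv ?_
  rw [Finset.sum_range_sub, sub_eq_zero]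
  simp only [flux, Nat.cast_zero, add_zero, add_sub_right_comm k (n : ℤ) 1,
    h.bond_periodic _ t ht, h.velocity_periodic _ t ht]

lemma eq_zero (h : IsChainSolution n u v) (hn : 1 ≤ n) (hu : ∀ j, u j 0 = 0)
    (hv : ∀ j, v j 0 = 0) {t : ℝ} (ht : 0 ≤ t) (k : ℤ) : u k t = 0 ∧ v k t = 0 := by
  have hconst := constant_of_has_deriv_right_zero
    (fun s hs => ((h.hasDerivWithinAt_energy k hs.1).continuousWithinAt).mono Icc_subset_Ici_self)
    (fun s hs => (h.hasDerivWithinAt_energy k hs.1).mono (Ici_subset_Ici.2 hs.1)) t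
    (right_mem_Icc.2 ht)
  simp only [hu, hv, ne_eq, OfNat.ofNat_ne_zero, not_false_eq_true, zero_pow, add_zero,
    Finset.sum_const_zero] at hconst
  have hterm := (Finset.sum_eq_zero_iff_of_nonneg fun i _ => by positivity).1 hconst 0
    (Finset.mem_range.2 hn)
  rw [Nat.cast_zero, add_zero, add_eq_zero_iff_of_nonneg (sq_nonneg _) (sq_nonneg _)] at hterm
  exact hterm.imp (pow_eq_zero_iff two_ne_zero).1 (pow_eq_zero_iff two_ne_zero).1

lemma eq_of_initial_eq (h : IsChainSolution n u v) (h' : IsChainSolution n u' v') (hn : 1 ≤ n)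
    (hu : ∀ j, u j 0 = u' j 0) (hv : ∀ j, v j 0 = v' j 0) {t : ℝ} (ht : 0 ≤ t) (k : ℤ) :
    u k t = u' k t ∧ v k t = v' k t :=
  ((h.sub h').eq_zero hn (fun j => sub_eq_zero.2 (hu j)) (fun j => sub_eq_zero.2 (hv j)) ht k).imp
    sub_eq_zero.1 sub_eq_zero.1

end IsChainSolution

/-- The bond variables of the solution of the chain that starts from a single unit bond. -/
noncomputable def bondWave (n : ℕ) (k : ℤ) (t : ℝ) : ℝ :=
  (latticeWave n k t + latticeWave n k (-t)) / 2

/-- The velocities that go with `bondWave`. -/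
noncomputable def velocityWave (n : ℕ) (k : ℤ) (t : ℝ) : ℝ :=
  (latticeWave n (k - 1 / 2) t - latticeWave n (k - 1 / 2) (-t)) / 2

lemma isChainSolution_bondWave {n : ℕ} (hn : 1 ≤ n) :
    IsChainSolution n (bondWave n) (velocityWave n) where
  bond_periodic k t _ := by
    have hper := fun t => latticeWave_periodic hn t k
    simp only at hper
    simp only [bondWave, Int.cast_add, Int.cast_natCast, hper]
  velocity_periodic k t _ := by
    have hper := fun t => latticeWave_periodic hn t (k - 1 / 2)
    simp only at hper
    simp only [velocityWave, Int.cast_add, Int.cast_natCast, add_sub_right_comm, hper]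
  hasDerivWithinAt_bond k t _ := by
    refine (((hasDerivAt_latticeWave n k t).fun_add
      ((hasDerivAt_latticeWave n k (-t)).scomp t (hasDerivAt_neg t))).div_const
        2).hasDerivWithinAt.congr_deriv ?_
    rw [velocityWave, velocityWave, Int.cast_add, Int.cast_one,
      show (k : ℝ) + 1 - 1 / 2 = k + 1 / 2 by ring, smul_eq_mul]
    ring
  hasDerivWithinAt_velocity k t _ := by
    refine (((hasDerivAt_latticeWave n (k - 1 / 2) t).fun_sub
      ((hasDerivAt_latticeWave n (k - 1 / 2) (-t)).scomp t (hasDerivAt_neg t))).div_const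
        2).hasDerivWithinAt.congr_deriv ?_
    rw [bondWave, bondWave, Int.cast_sub, Int.cast_one, sub_add_cancel,
      show (k : ℝ) - 1 / 2 - 1 / 2 = k - 1 by ring, smul_eq_mul]
    ring

end

lemma two_mul_rpow_neg_le {N : ℕ} (hN : 1 ≤ N) :
    ((2 * N : ℕ) : ℝ) ^ (-(1 / 4) : ℝ) ≤ (N : ℝ) ^ (-(1 / 7) : ℝ) := by
  have hN' : (1 : ℝ) ≤ N := by exact_mod_cast hN
  calc ((2 * N : ℕ) : ℝ) ^ (-(1 / 4) : ℝ)
      ≤ (N : ℝ) ^ (-(1 / 4) : ℝ) :=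
        Real.rpow_le_rpow_of_nonpos (by positivity) (by exact_mod_cast (by lia : N ≤ 2 * N))
          (by norm_num)
    _ ≤ (N : ℝ) ^ (-(1 / 7) : ℝ) := Real.rpow_le_rpow_of_exponent_le hN' (by norm_num)

/-- For `j ∉ s` the inner supremum is over the empty set, hence `0`. -/
lemma iSup_mem_abs_le {ι : Type*} {s : Finset ι} {w : ι → ℝ} {B : ℝ} (hB : 0 ≤ B)
    (h : ∀ j ∈ s, |w j| ≤ B) : ⨆ j ∈ s, |w j| ≤ B :=
  Real.iSup_le (fun j => Real.iSup_le (h j) hB) hB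

lemma tendsto_iSup_mem_abs_zero {ι : Type*} {s : ℕ → Finset ι} {w : ℕ → ι → ℝ} {C r : ℝ}
    (hC : 0 ≤ C) (hr : 0 < r) (h : ∀ N : ℕ, 1 ≤ N → ∀ j ∈ s N, |w N j| ≤ C * (N : ℝ) ^ (-r)) :
    Tendsto (fun N => ⨆ j ∈ s N, |w N j|) atTop (nhds 0) := by
  have hlim : Tendsto (fun N : ℕ => C * (N : ℝ) ^ (-r)) atTop (nhds 0) := by
    simpa only [mul_zero, Function.comp_def] using
      ((tendsto_rpow_neg_atTop hr).comp tendsto_natCast_atTop_atTop).const_mul C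
  refine squeeze_zero' (Eventually.of_forall fun N => ?_)
    ((eventually_ge_atTop 1).mono fun N hN => iSup_mem_abs_le (by positivity) (h N hN)) hlim
  exact Real.iSup_nonneg fun j => Real.iSup_nonneg fun _ => abs_nonneg (w N j)

theorem dispersive_decay_single_bond_general {τ : ℝ} (hτ : 0 < τ) :
    ∃ C > 0, ∀ n : ℕ, 1 ≤ n → ∀ u v : ℤ → ℝ → ℝ, IsChainSolution n u v →
      (∀ j, u j 0 = if j % n = 0 then 1 else 0) → (∀ j, v j 0 = 0) → ∀ k,
        |u k (n * τ)| ≤ C * (n : ℝ) ^ (-(1 / 4) : ℝ) ∧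
        |v k (n * τ)| ≤ C * (n : ℝ) ^ (-(1 / 4) : ℝ) := by
  obtain ⟨C₁, hC₁, hforward⟩ := exists_abs_latticeWave_le hτ.ne'
  obtain ⟨C₂, hC₂, hbackward⟩ := exists_abs_latticeWave_le (neg_ne_zero.2 hτ.ne')
  refine ⟨(C₁ + C₂) / 2, by positivity, fun n hn u v h hu hv k => ?_⟩
  obtain ⟨huk, hvk⟩ := h.eq_of_initial_eq (isChainSolution_bondWave hn) hn
    (fun j => by simp only [hu, bondWave, neg_zero, add_self_div_two, latticeWave_intCast_zero hn])
    (fun j => by simp only [hv, velocityWave, neg_zero, sub_self, zero_div])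
    (show 0 ≤ n * τ by positivity) k
  rw [huk, hvk, bondWave, velocityWave, ← mul_neg, abs_div, abs_div, abs_two]
  constructor
  · linarith [abs_add_le (latticeWave n k (n * τ)) (latticeWave n k (n * -τ)), hforward n hn k,
      hbackward n hn k]
  · linarith [abs_sub (latticeWave n (k - 1 / 2) (n * τ)) (latticeWave n (k - 1 / 2) (n * -τ)),
      hforward n hn (k - 1 / 2), hbackward n hn (k - 1 / 2)]

/-- **Dispersive decay for a single-bond perturbation in the linear periodic chain.**
For the linear periodic chain `(U_j)' = V_{j+1} − V_j`, `(V_j)' = U_j − U_{j−1}` on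
`ℤ/2Nℤ` with initial data `U_j(0) = δ_j^0`, `V_j(0) = 0`, for every `τ > 0` there is
`C > 0` with `max_j |U^N_j(Nτ)| ≤ C N^{−1/7}` for all `N ≥ 1`; in particular both
`max_j |U^N_j(Nτ)|` and `max_j |V^N_j(Nτ)|` tend to `0` as `N → ∞`. -/
theorem dispersive_decay_single_bond
    (U V : ℕ → ℤ → ℝ → ℝ)
    (hper : ∀ N : ℕ, 1 ≤ N → ∀ (j : ℤ) (t : ℝ),
      U N (j + 2 * (N : ℤ)) t = U N j t ∧ V N (j + 2 * (N : ℤ)) t = V N j t)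
    (hode : ∀ N : ℕ, 1 ≤ N → ∀ (j : ℤ), ∀ t ∈ Set.Ici (0 : ℝ),
      HasDerivWithinAt (U N j) (V N (j + 1) t - V N j t) (Set.Ici 0) t ∧
      HasDerivWithinAt (V N j) (U N j t - U N (j - 1) t) (Set.Ici 0) t)
    (hU0 : ∀ N : ℕ, 1 ≤ N → ∀ j : ℤ,
      U N j 0 = if j % (2 * (N : ℤ)) = 0 then 1 else 0)
    (hV0 : ∀ N : ℕ, 1 ≤ N → ∀ j : ℤ, V N j 0 = 0)
    (τ : ℝ) (hτ : 0 < τ) :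
    (∃ C > 0, ∀ N : ℕ, 1 ≤ N →
        (⨆ j ∈ Finset.range (2 * N), |U N (j : ℤ) ((N : ℝ) * τ)|)
          ≤ C * (N : ℝ) ^ (-(1 / 7) : ℝ)) ∧
    Tendsto (fun N : ℕ =>
        ⨆ j ∈ Finset.range (2 * N), |U N (j : ℤ) ((N : ℝ) * τ)|) atTop (nhds 0) ∧
    Tendsto (fun N : ℕ =>
        ⨆ j ∈ Finset.range (2 * N), |V N (j : ℤ) ((N : ℝ) * τ)|) atTop (nhds 0) := by
  obtain ⟨C, hC, hdecay⟩ := dispersive_decay_single_bond_general (half_pos hτ)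
  have hchain : ∀ N, 1 ≤ N → IsChainSolution (2 * N) (U N) (V N) := fun N hN =>
    ⟨fun j t _ => by simpa using (hper N hN j t).1, fun j t _ => by simpa using (hper N hN j t).2,
      fun j t ht => (hode N hN j t ht).1, fun j t ht => (hode N hN j t ht).2⟩
  have hbound : ∀ N : ℕ, 1 ≤ N → ∀ j : ℕ, |U N j (N * τ)| ≤ C * (N : ℝ) ^ (-(1 / 7) : ℝ) ∧
      |V N j (N * τ)| ≤ C * (N : ℝ) ^ (-(1 / 7) : ℝ) := fun N hN j => by
    have h := hdecay (2 * N) (by lia) (U N) (V N) (hchain N hN) (by simpa using hU0 N hN)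
      (hV0 N hN) j
    rw [show ((2 * N : ℕ) : ℝ) * (τ / 2) = N * τ by push_cast; ring] at h
    have hrate := mul_le_mul_of_nonneg_left (two_mul_rpow_neg_le hN) hC.le
    exact h.imp hrate.trans' hrate.trans'
  exact ⟨⟨C, hC, fun N hN => iSup_mem_abs_le (by positivity) fun j _ => (hbound N hN j).1⟩,
    tendsto_iSup_mem_abs_zero hC.le (by norm_num) fun N hN j _ => (hbound N hN j).1,
    tendsto_iSup_mem_abs_zero hC.le (by norm_num) fun N hN j _ => (hbound N hN j).2⟩
end

section
/- Non-existence of discrete shock waves for strictly convex W': let W ∈ C³(ℝ) with W''(u) ≥ α > 0 for all u and W'''(u) > 0 for all u. Then for every u_l ≠ u_r there is no discrete shock wave of the Newton chain on ℤ associated with (u_l, u_r); that is, there exist no φ ∈ C²(ℝ) and c ∈ ℝ such that c²φ''(x) = W'(φ(x+1) − φ(x)) − W'(φ(x) − φ(x−1)) for all x ∈ ℝ, φ'(x) → u_l as x → −∞, and φ'(x) → u_r as x → +∞ with u_l ≠ u_r. -/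
open Filter

/-!
Let `r x = φ x - φ (x - 1)` be the strain profile. The travelling-wave equation says that `c² φ'`
has derivative `p (x + 1) - p x` with `p = W' ∘ r`; multiplied by `φ'`, it says that
`c² φ'² / 2 + W ∘ r` has a derivative of the same shape with `p x = φ' (x - 1) W' (r x)`. In both
cases subtracting `∫_x^{x+1} p` leaves a constant. Comparing its limits at `±∞` yields the
Rankine–Hugoniot relation `c² (u_r - u_l) = W'(u_r) - W'(u_l)` and an energy balance; eliminating
`c²` gives `W(u_r) - W(u_l) = (u_r - u_l) (W'(u_r) + W'(u_l)) / 2`. So the trapezoidal rule is exact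
for `∫ W'` between the two states, which strict convexity of `W'` forbids.
-/

open scoped Topology

section Increments

variable {E : Type*} [NormedAddCommGroup E] [NormedSpace ℝ E]

lemma isLittleO_sub_sub_smul_of_tendsto_deriv {ι : Type*} {k : Filter ι} {l : Filter ℝ}
    [TendstoIxxClass Set.Icc l l] {f f' : ℝ → E} {L : E} {u v : ι → ℝ}
    (hf : ∀ᶠ x in l, HasDerivAt f (f' x) x) (hf' : Tendsto f' l (𝓝 L))
    (hu : Tendsto u k l) (hv : Tendsto v k l) :
    (fun i => f (v i) - f (u i) - (v i - u i) • L) =o[k] fun i => v i - u i := by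
  refine Asymptotics.IsLittleO.of_bound fun ε hε => ?_
  have hnear : ∀ᶠ x in l, HasDerivAt f (f' x) x ∧ ‖f' x - L‖ < ε :=
    hf.and (by simpa only [dist_eq_norm] using Metric.tendsto_nhds.1 hf' ε hε)
  filter_upwards [(hu.uIcc hv).eventually (eventually_smallSets_forall.2 hnear)] with i hi
  have hbound := (convex_uIcc (u i) (v i)).norm_image_sub_le_of_norm_hasDerivWithin_le
    (f := fun x => f x - x • L)
    (fun x hx => ((hi x hx).1.sub ((hasDerivAt_id x).smul_const L)).hasDerivWithinAt)
    (fun x hx => by simpa only [one_smul] using (hi x hx).2.le)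
    Set.left_mem_uIcc Set.right_mem_uIcc
  simpa only [sub_smul, sub_sub_sub_comm] using hbound

lemma tendsto_add_sub_of_tendsto_deriv {l : Filter ℝ} [TendstoIxxClass Set.Icc l l]
    {f f' : ℝ → E} {L : E} {h : ℝ} (hf : ∀ᶠ x in l, HasDerivAt f (f' x) x)
    (hf' : Tendsto f' l (𝓝 L)) (hl : Tendsto (· + h) l l) :
    Tendsto (fun x => f (x + h) - f x) l (𝓝 (h • L)) := by
  have ho := isLittleO_sub_sub_smul_of_tendsto_deriv hf hf' tendsto_id hl
  simp only [id, add_sub_cancel_left] at ho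
  exact tendsto_sub_nhds_zero_iff.1 (ho.tendsto_zero_of_tendsto tendsto_const_nhds)

/-- The conserved quantity whose limits are compared is `A x - ∫_x^{x+h} p`. -/
lemma sub_smul_eq_sub_smul_of_hasDerivAt_add_sub [CompleteSpace E] {A p : ℝ → E} {h : ℝ}
    {Aₗ Aᵣ pₗ pᵣ : E} (hp : Continuous p) (hA : ∀ x, HasDerivAt A (p (x + h) - p x) x)
    (hAₗ : Tendsto A atBot (𝓝 Aₗ)) (hAᵣ : Tendsto A atTop (𝓝 Aᵣ))
    (hpₗ : Tendsto p atBot (𝓝 pₗ)) (hpᵣ : Tendsto p atTop (𝓝 pᵣ)) :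
    Aₗ - h • pₗ = Aᵣ - h • pᵣ := by
  let P (x : ℝ) : E := ∫ t in (0 : ℝ)..x, p t
  have hP (x : ℝ) : HasDerivAt P (p x) x := (hp.integral_hasStrictDerivAt 0 x).hasDerivAt
  let I (x : ℝ) : E := A x - (P (x + h) - P x)
  have hI (x : ℝ) : HasDerivAt I 0 x :=
    ((hA x).sub (((hP (x + h)).comp_add_const x h).sub (hP x))).congr_deriv (sub_self _)
  have hconst : I = fun _ => I 0 := funext fun x =>
    is_const_of_deriv_eq_zero (fun y => (hI y).differentiableAt) (fun y => (hI y).deriv) x 0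
  have hIₗ : Tendsto I atBot (𝓝 (Aₗ - h • pₗ)) := hAₗ.sub <|
    tendsto_add_sub_of_tendsto_deriv (.of_forall hP) hpₗ
      (tendsto_atBot_add_const_right _ h tendsto_id)
  have hIᵣ : Tendsto I atTop (𝓝 (Aᵣ - h • pᵣ)) := hAᵣ.sub <|
    tendsto_add_sub_of_tendsto_deriv (.of_forall hP) hpᵣ
      (tendsto_atTop_add_const_right _ h tendsto_id)
  rw [hconst] at hIₗ hIᵣ
  exact (tendsto_nhds_unique hIₗ tendsto_const_nhds).trans
    (tendsto_nhds_unique tendsto_const_nhds hIᵣ)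

end Increments

section Trapezoid

variable {f f' : ℝ → ℝ} {a b : ℝ}

lemma sub_lt_trapezoid_of_strictConvexOn (hab : a < b) (hf : ContinuousOn f (Set.Icc a b))
    (hf' : ∀ x ∈ Set.Ioo a b, HasDerivAt f (f' x) x) (hconv : StrictConvexOn ℝ (Set.Icc a b) f') :
    f b - f a < (b - a) * (f' a + f' b) / 2 := by
  -- `(b - a) * f` minus a primitive of `(b - a)` times the chord of `f'`
  let g : ℝ → ℝ := fun x => (b - a) * f x - ((x - a) ^ 2 / 2 * f' b - (b - x) ^ 2 / 2 * f' a)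
  have hg (x) (hx : x ∈ Set.Ioo a b) :
      HasDerivAt g ((b - a) * f' x - ((b - x) * f' a + (x - a) * f' b)) x := by
    have ha := ((((hasDerivAt_id x).sub_const a).pow 2).div_const 2).mul_const (f' b)
    have hb := ((((hasDerivAt_id x).const_sub b).pow 2).div_const 2).mul_const (f' a)
    refine (((hf' x hx).const_mul (b - a)).sub (ha.sub hb)).congr_deriv ?_
    simp only [id]
    ring
  have hchord (x) (hx : x ∈ Set.Ioo a b) : (b - a) * f' x < (b - x) * f' a + (x - a) * f' b :=
    hconv.secant_strict_mono_aux1 (Set.left_mem_Icc.2 hab.le) (Set.right_mem_Icc.2 hab.le) hx.1 hx.2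
  have hanti : StrictAntiOn g (Set.Icc a b) := by
    refine strictAntiOn_of_deriv_neg (convex_Icc a b) (by fun_prop) fun x hx => ?_
    rw [interior_Icc] at hx
    rw [(hg x hx).deriv]
    exact sub_neg.2 (hchord x hx)
  have hlt : g b < g a := hanti (Set.left_mem_Icc.2 hab.le) (Set.right_mem_Icc.2 hab.le) hab
  refine lt_of_mul_lt_mul_left ?_ (sub_pos.2 hab).le
  simp only [g] at hlt
  linarith

lemma sub_ne_trapezoid_of_strictConvexOn (hab : a ≠ b)
    (hf : ∀ x ∈ Set.uIcc a b, HasDerivAt f (f' x) x) (hconv : StrictConvexOn ℝ (Set.uIcc a b) f') :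
    f b - f a ≠ (b - a) * (f' a + f' b) / 2 := by
  wlog hlt : a < b generalizing a b
  · rw [Set.uIcc_comm] at hf hconv
    have hswap := this hab.symm hf hconv (hab.lt_or_gt.resolve_left hlt)
    contrapose hswap
    linear_combination -hswap
  · rw [Set.uIcc_of_le hlt.le] at hf hconv
    exact (sub_lt_trapezoid_of_strictConvexOn hlt
      (fun x hx => (hf x hx).continuousAt.continuousWithinAt)
      (fun x hx => hf x (Set.Ioo_subset_Icc_self hx)) hconv).ne

end Trapezoid

/-- The strain profile `x ↦ φ x - φ (x - 1)`: along the travelling wave `X_j(t) = φ (j - c t)` of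
the chain, the bond length `X_j - X_{j-1}` is its value at `j - c t`. -/
def strain (φ : ℝ → ℝ) (x : ℝ) : ℝ := φ x - φ (x - 1)

lemma tendsto_strain {φ φ' : ℝ → ℝ} {l : Filter ℝ} [TendstoIxxClass Set.Icc l l] {u : ℝ}
    (hφ : ∀ᶠ x in l, HasDerivAt φ (φ' x) x) (hu : Tendsto φ' l (𝓝 u))
    (hl : Tendsto (· - 1) l l) : Tendsto (strain φ) l (𝓝 u) := by
  have hneg := (tendsto_add_sub_of_tendsto_deriv (h := -1) hφ hu hl).neg
  simp only [neg_sub, neg_smul, one_smul, neg_neg, ← sub_eq_add_neg] at hneg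
  exact hneg

/-- `X_j(t) = φ (j - c t)` is a discrete shock wave with states `(ul, ur)` and speed `c` of the
Newton chain with interaction potential `W`, written in terms of the profile `φ`. The degenerate
case `ul = ur` is not excluded. -/
structure IsDiscreteShockWave (W φ : ℝ → ℝ) (c ul ur : ℝ) : Prop where
  contDiff : ContDiff ℝ 2 φ
  wave_eq : ∀ x, c ^ 2 * deriv (deriv φ) x
    = deriv W (φ (x + 1) - φ x) - deriv W (φ x - φ (x - 1))
  tendsto_atBot : Tendsto (deriv φ) atBot (𝓝 ul)
  tendsto_atTop : Tendsto (deriv φ) atTop (𝓝 ur)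

namespace IsDiscreteShockWave

variable {W φ : ℝ → ℝ} {c ul ur : ℝ}

lemma hasDerivAt (h : IsDiscreteShockWave W φ c ul ur) (x : ℝ) : HasDerivAt φ (deriv φ x) x :=
  (h.contDiff.differentiable two_ne_zero x).hasDerivAt

lemma hasDerivAt_deriv (h : IsDiscreteShockWave W φ c ul ur) (x : ℝ) :
    HasDerivAt (deriv φ) (deriv (deriv φ) x) x :=
  (h.contDiff.differentiable_deriv_two x).hasDerivAt

lemma hasDerivAt_strain (h : IsDiscreteShockWave W φ c ul ur) (x : ℝ) :
    HasDerivAt (strain φ) (deriv φ x - deriv φ (x - 1)) x :=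
  (h.hasDerivAt x).sub ((h.hasDerivAt (x - 1)).comp_sub_const x 1)

lemma continuous_strain (h : IsDiscreteShockWave W φ c ul ur) : Continuous (strain φ) :=
  continuous_iff_continuousAt.2 fun x => (h.hasDerivAt_strain x).continuousAt

lemma tendsto_strain_atBot (h : IsDiscreteShockWave W φ c ul ur) :
    Tendsto (strain φ) atBot (𝓝 ul) :=
  tendsto_strain (.of_forall h.hasDerivAt) h.tendsto_atBot
    (tendsto_atBot_add_const_right _ (-1) tendsto_id)

lemma tendsto_strain_atTop (h : IsDiscreteShockWave W φ c ul ur) :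
    Tendsto (strain φ) atTop (𝓝 ur) :=
  tendsto_strain (.of_forall h.hasDerivAt) h.tendsto_atTop
    (tendsto_atTop_add_const_right _ (-1) tendsto_id)

lemma hasDerivAt_momentum (h : IsDiscreteShockWave W φ c ul ur) (x : ℝ) :
    HasDerivAt (fun x => c ^ 2 * deriv φ x)
      (deriv W (strain φ (x + 1)) - deriv W (strain φ x)) x := by
  refine ((h.hasDerivAt_deriv x).const_mul (c ^ 2)).congr_deriv ?_
  simp only [strain, add_sub_cancel_right, h.wave_eq]

lemma rankine_hugoniot (h : IsDiscreteShockWave W φ c ul ur) (hW : Continuous (deriv W)) :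
    c ^ 2 * (ur - ul) = deriv W ur - deriv W ul := by
  have hbalance := sub_smul_eq_sub_smul_of_hasDerivAt_add_sub
    (hW.comp h.continuous_strain) h.hasDerivAt_momentum
    (h.tendsto_atBot.const_mul _) (h.tendsto_atTop.const_mul _)
    ((hW.tendsto ul).comp h.tendsto_strain_atBot) ((hW.tendsto ur).comp h.tendsto_strain_atTop)
  simp only [one_smul] at hbalance
  linear_combination -hbalance

lemma hasDerivAt_energy (h : IsDiscreteShockWave W φ c ul ur) (hW : Differentiable ℝ W) (x : ℝ) :
    HasDerivAt (fun x => c ^ 2 / 2 * deriv φ x ^ 2 + W (strain φ x))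
      (deriv φ x * deriv W (strain φ (x + 1)) - deriv φ (x - 1) * deriv W (strain φ x)) x := by
  have hkin := ((h.hasDerivAt_deriv x).pow 2).const_mul (c ^ 2 / 2)
  have hpot := (hW (strain φ x)).hasDerivAt.comp x (h.hasDerivAt_strain x)
  refine (hkin.add hpot).congr_deriv ?_
  simp only [strain, add_sub_cancel_right]
  push_cast
  linear_combination deriv φ x * h.wave_eq x

lemma energy_balance (h : IsDiscreteShockWave W φ c ul ur) (hW : ContDiff ℝ 1 W) :
    c ^ 2 / 2 * (ur ^ 2 - ul ^ 2) + (W ur - W ul) = ur * deriv W ur - ul * deriv W ul := by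
  let energy (x : ℝ) : ℝ := c ^ 2 / 2 * deriv φ x ^ 2 + W (strain φ x)
  let flux (x : ℝ) : ℝ := deriv φ (x - 1) * deriv W (strain φ x)
  have hW' : Continuous (deriv W) := hW.continuous_deriv_one
  have hflux : Continuous flux :=
    ((h.contDiff.continuous_deriv one_le_two).comp (continuous_sub_right 1)).mul
      (hW'.comp h.continuous_strain)
  have hderiv (x : ℝ) : HasDerivAt energy (flux (x + 1) - flux x) x := by
    simpa only [flux, add_sub_cancel_right] using
      h.hasDerivAt_energy (hW.differentiable one_ne_zero) x
  have henergyₗ : Tendsto energy atBot (𝓝 (c ^ 2 / 2 * ul ^ 2 + W ul)) :=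
    ((h.tendsto_atBot.pow 2).const_mul _).add
      ((hW.continuous.tendsto ul).comp h.tendsto_strain_atBot)
  have henergyᵣ : Tendsto energy atTop (𝓝 (c ^ 2 / 2 * ur ^ 2 + W ur)) :=
    ((h.tendsto_atTop.pow 2).const_mul _).add
      ((hW.continuous.tendsto ur).comp h.tendsto_strain_atTop)
  have hfluxₗ : Tendsto flux atBot (𝓝 (ul * deriv W ul)) :=
    (h.tendsto_atBot.comp (tendsto_atBot_add_const_right _ (-1) tendsto_id)).mul
      ((hW'.tendsto ul).comp h.tendsto_strain_atBot)
  have hfluxᵣ : Tendsto flux atTop (𝓝 (ur * deriv W ur)) :=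
    (h.tendsto_atTop.comp (tendsto_atTop_add_const_right _ (-1) tendsto_id)).mul
      ((hW'.tendsto ur).comp h.tendsto_strain_atTop)
  have hbalance := sub_smul_eq_sub_smul_of_hasDerivAt_add_sub hflux hderiv
    henergyₗ henergyᵣ hfluxₗ hfluxᵣ
  simp only [one_smul] at hbalance
  linear_combination -hbalance

lemma sub_eq_trapezoid (h : IsDiscreteShockWave W φ c ul ur) (hW : ContDiff ℝ 1 W) :
    W ur - W ul = (ur - ul) * (deriv W ul + deriv W ur) / 2 := by
  linear_combination h.energy_balance hW -
    (ul + ur) / 2 * h.rankine_hugoniot hW.continuous_deriv_one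

end IsDiscreteShockWave

theorem no_discrete_shock_convex_general {W : ℝ → ℝ} {ul ur : ℝ} (hW : ContDiff ℝ 1 W)
    (hconv : StrictConvexOn ℝ (Set.uIcc ul ur) (deriv W)) (hne : ul ≠ ur) :
    ¬ ∃ (φ : ℝ → ℝ) (c : ℝ), IsDiscreteShockWave W φ c ul ur := fun ⟨_, _, h⟩ =>
  sub_ne_trapezoid_of_strictConvexOn hne
    (fun u _ => (hW.differentiable one_ne_zero u).hasDerivAt) hconv (h.sub_eq_trapezoid hW)

/-- **Non-existence of discrete shock waves for strictly convex `W'`.**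
Let `W ∈ C³(ℝ)` with `W'' ≥ α > 0` and `W''' > 0`. For `u_l ≠ u_r` there is no
travelling-wave profile `φ ∈ C²(ℝ)` and speed `c` with
`c²φ''(x) = W'(φ(x+1) − φ(x)) − W'(φ(x) − φ(x−1))`, `φ' → u_l` at `−∞`, `φ' → u_r` at `+∞`. -/
theorem no_discrete_shock_convex
    (W : ℝ → ℝ) (hW : ContDiff ℝ 3 W)
    (α : ℝ) (hα : 0 < α) (hW2 : ∀ u : ℝ, α ≤ deriv (deriv W) u)
    (hW3 : ∀ u : ℝ, 0 < deriv (deriv (deriv W)) u)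
    (ul ur : ℝ) (hne : ul ≠ ur) :
    ¬ ∃ (φ : ℝ → ℝ) (c : ℝ), ContDiff ℝ 2 φ ∧
      (∀ x : ℝ, c ^ 2 * deriv (deriv φ) x
        = deriv W (φ (x + 1) - φ x) - deriv W (φ x - φ (x - 1))) ∧
      Tendsto (deriv φ) atBot (nhds ul) ∧ Tendsto (deriv φ) atTop (nhds ur) := by
  rintro ⟨φ, c, hφ, hwave, hl, hr⟩
  have hconv : StrictConvexOn ℝ Set.univ (deriv W) :=
    strictConvexOn_univ_of_deriv2_pos (hW.continuous_deriv (by norm_num)) hW3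
  exact no_discrete_shock_convex_general (hW.of_le (by norm_num))
    (hconv.subset (Set.subset_univ _) (convex_uIcc ul ur)) hne ⟨φ, c, hφ, hwave, hl, hr⟩
end
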